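/- arXiv:2411.18188 — 2 statements merged into one kernel-verified Lean document; each statement's English description precedes it below -/
import Mathlib

section
/- Let N ≥ 1, s ∈ (0,1), let G be a Young function satisfying the growth condition with exponents 1 < p⁻ ≤ p⁺ < ∞, and let Ω be a nonempty open subset of ℝ^N with |Ω| < ∞. Then there exists a nonnegative function u ∈ C_c^∞(Ω) such that ∬_{Ω×Ω} G(|u(x)−u(y)|/|x−y|^s) |x−y|^{−N} dx dy < ∬_{Ω*×Ω*} G(|u*(x)−u*(y)|/|x−y|^s) |x−y|^{−N} dx dy. In other words, the Pólya–Szegő inequality for the fractional Orlicz–Sobolev seminorm restricted to a domain fails. -/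
open MeasureTheory Metric Set Filter
open scoped ENNReal Topology

/-- The volume of the unit ball in `ℝ^N`. -/
noncomputable def ballVol (N : ℕ) : ℝ≥0∞ :=
  volume (Metric.ball (0 : EuclideanSpace ℝ (Fin N)) 1)

/-- The symmetric rearrangement `Ω*` of a set: the open ball centered at the origin
with the same volume. -/
noncomputable def rearrangeSet {N : ℕ} (Ω : Set (EuclideanSpace ℝ (Fin N))) :
    Set (EuclideanSpace ℝ (Fin N)) :=
  Metric.ball 0 (((volume Ω).toReal / (ballVol N).toReal) ^ ((N : ℝ)⁻¹))

/-- The symmetric decreasing rearrangement `u*` of a nonnegative function: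
`u* x = sup {t > 0 : |{u > t}| > α_N |x|^N}` (with `sup ∅ = 0`). -/
noncomputable def rearrangeFun {N : ℕ} (u : EuclideanSpace ℝ (Fin N) → ℝ)
    (x : EuclideanSpace ℝ (Fin N)) : ℝ :=
  sSup {t : ℝ | 0 < t ∧ ballVol N * ENNReal.ofReal (‖x‖ ^ N) < volume {y | t < u y}}

/-- `G` is a Young function with right-continuous nondecreasing density `g`. -/
structure IsYoungPair (G g : ℝ → ℝ) : Prop where
  g_zero : g 0 = 0
  g_pos : ∀ t > 0, 0 < g t
  g_mono : MonotoneOn g (Set.Ici 0)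
  g_rightCont : ∀ t ≥ 0, ContinuousWithinAt g (Set.Ici t) t
  g_tendsto : Filter.Tendsto g Filter.atTop Filter.atTop
  G_eq : ∀ t ≥ 0, G t = ∫ τ in (0:ℝ)..t, g τ

/-- The growth condition `pm ≤ t g(t)/G(t) ≤ pp` with exponents `1 < pm ≤ pp < ∞`. -/
def GrowthCond (G g : ℝ → ℝ) (pm pp : ℝ) : Prop :=
  1 < pm ∧ pm ≤ pp ∧ ∀ t > 0, pm * G t ≤ t * g t ∧ t * g t ≤ pp * G t

/-- The fractional Orlicz–Sobolev seminorm
`∬_{A×B} G(|u x − u y|/|x−y|^s) |x−y|^{−N} dx dy`. -/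
noncomputable def fracSeminorm {N : ℕ} (s : ℝ) (G : ℝ → ℝ)
    (u : EuclideanSpace ℝ (Fin N) → ℝ) (A B : Set (EuclideanSpace ℝ (Fin N))) : ℝ≥0∞ :=
  ∫⁻ x in A, ∫⁻ y in B,
    ENNReal.ofReal (G (|u x - u y| / dist x y ^ s) / dist x y ^ (N : ℝ))

/-- `u ∈ C_c^∞(Ω)`. -/
def IsTestFun {N : ℕ} (Ω : Set (EuclideanSpace ℝ (Fin N)))
    (u : EuclideanSpace ℝ (Fin N) → ℝ) : Prop :=
  ContDiff ℝ (⊤ : ℕ∞) u ∧ HasCompactSupport u ∧ tsupport u ⊆ Ω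

namespace IsYoungPair

variable {G g : ℝ → ℝ}

lemma intervalIntegrable (hY : IsYoungPair G g) {a b : ℝ} (ha : 0 ≤ a) (hb : 0 ≤ b) :
    IntervalIntegrable g volume a b :=
  (hY.g_mono.mono fun _ hx => (le_inf ha hb).trans hx.1).intervalIntegrable

lemma monotoneOn (hY : IsYoungPair G g) : MonotoneOn G (Ici 0) := by
  intro a ha b hb hab
  rw [hY.G_eq a ha, hY.G_eq b hb, ← intervalIntegral.integral_add_adjacent_intervals
    (hY.intervalIntegrable le_rfl ha) (hY.intervalIntegrable ha hb)]
  have : 0 ≤ ∫ τ in a..b, g τ := by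
    refine intervalIntegral.integral_nonneg hab fun t ht => ?_
    rcases (le_trans ha ht.1).eq_or_lt with h | h
    · rw [← h, hY.g_zero]
    · exact (hY.g_pos t h).le
  linarith

lemma map_zero (hY : IsYoungPair G g) : G 0 = 0 := by
  rw [hY.G_eq 0 le_rfl, intervalIntegral.integral_same]

lemma pos (hY : IsYoungPair G g) {pm pp : ℝ} (hG : GrowthCond G g pm pp) {t : ℝ} (ht : 0 < t) :
    0 < G t := by
  obtain ⟨h1, h2, h3⟩ := hG
  exact pos_of_mul_pos_right ((mul_pos ht (hY.g_pos t ht)).trans_le (h3 t ht).2) (by linarith)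

lemma le_mul (hY : IsYoungPair G g) {t : ℝ} (ht : 0 ≤ t) : G t ≤ t * g t := by
  rw [hY.G_eq t ht]
  calc ∫ τ in (0 : ℝ)..t, g τ ≤ ∫ _ in (0 : ℝ)..t, g t :=
        intervalIntegral.integral_mono_on ht (hY.intervalIntegrable le_rfl ht)
          intervalIntegrable_const fun x hx => hY.g_mono hx.1 ht hx.2
    _ = t * g t := by simp

end IsYoungPair

/-- The integrand of the fractional Orlicz–Sobolev seminorm. -/
noncomputable def orliczKernel {N : ℕ} (s : ℝ) (G : ℝ → ℝ) (v : EuclideanSpace ℝ (Fin N) → ℝ)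
    (x y : EuclideanSpace ℝ (Fin N)) : ℝ≥0∞ :=
  ENNReal.ofReal (G (|v x - v y| / dist x y ^ s) / dist x y ^ (N : ℝ))

section Kernel

variable {N : ℕ} {s : ℝ} {G g : ℝ → ℝ} {v : EuclideanSpace ℝ (Fin N) → ℝ}

lemma orliczKernel_comm (x y : EuclideanSpace ℝ (Fin N)) :
    orliczKernel s G v x y = orliczKernel s G v y x := by
  simp only [orliczKernel, abs_sub_comm (v x), dist_comm x]

lemma orliczKernel_eq_zero (hY : IsYoungPair G g) {x y : EuclideanSpace ℝ (Fin N)}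
    (h : v x = v y) : orliczKernel s G v x y = 0 := by
  simp [orliczKernel, h, hY.map_zero]

lemma measurable_orliczKernel (hY : IsYoungPair G g) (hv : Measurable v) :
    Measurable (Function.uncurry (orliczKernel s G v)) := by
  have hm : Measurable fun t => G (max 0 t) :=
    Monotone.measurable fun a b hab =>
      hY.monotoneOn (mem_Ici.2 (le_max_left _ _)) (mem_Ici.2 (le_max_left _ _))
        (max_le_max le_rfl hab)
  have heq : Function.uncurry (orliczKernel s G v) = fun p =>
      ENNReal.ofReal ((fun t => G (max 0 t)) (|v p.1 - v p.2| / dist p.1 p.2 ^ s)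
        / dist p.1 p.2 ^ (N : ℝ)) := by
    funext p
    have : 0 ≤ |v p.1 - v p.2| / dist p.1 p.2 ^ s := by positivity
    simp only [Function.uncurry, orliczKernel, max_eq_right this]
  rw [heq]
  have hd : Measurable fun p : EuclideanSpace ℝ (Fin N) × EuclideanSpace ℝ (Fin N) =>
    dist p.1 p.2 := measurable_dist
  have habs : Measurable fun p : EuclideanSpace ℝ (Fin N) × EuclideanSpace ℝ (Fin N) =>
      |v p.1 - v p.2| :=
    ((hv.comp measurable_fst).sub (hv.comp measurable_snd)).norm
  exact ((hm.comp (habs.div (hd.pow_const s))).div (hd.pow_const _)).ennreal_ofReal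

/-- The kernel of a bounded Lipschitz function has a weak singularity on the diagonal. -/
lemma orliczKernel_le (hs : s ∈ Ioo (0 : ℝ) 1) (hY : IsYoungPair G g)
    {L : NNReal} (hL : LipschitzWith L v) (hb : ∀ x y, |v x - v y| ≤ 1)
    (x y : EuclideanSpace ℝ (Fin N)) :
    orliczKernel s G v x y ≤
      (ball 0 1).indicator (fun z => ENNReal.ofReal (L * g L * ‖z‖ ^ (1 - s - N))) (y - x) +
        ENNReal.ofReal (G 1) := by
  obtain ⟨hs0, hs1⟩ := hs
  have hdist : ‖y - x‖ = dist x y := by rw [dist_comm, dist_eq_norm]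
  have hlip : |v x - v y| ≤ L * dist x y := by
    simpa [Real.dist_eq] using hL.dist_le_mul x y
  rcases eq_or_ne x y with rfl | hxy
  · simp [orliczKernel_eq_zero hY rfl]
  have hd : 0 < dist x y := dist_pos.2 hxy
  set d := dist x y
  set t := |v x - v y| / d ^ s with ht
  have ht0 : 0 ≤ t := by positivity
  by_cases h : d < 1
  · rw [indicator_of_mem (by simpa [hdist] using h), hdist]
    refine le_add_right (ENNReal.ofReal_le_ofReal ?_)
    have h1 : t ≤ L * d ^ (1 - s) := by
      rw [ht, div_le_iff₀ (by positivity), mul_assoc, ← Real.rpow_add hd]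
      simpa using hlip
    have h2 : t ≤ L := h1.trans <| mul_le_of_le_one_right L.2
      (Real.rpow_le_one hd.le h.le (by linarith))
    have hgL : g t ≤ g L := hY.g_mono ht0 L.2 h2
    have hgt : 0 ≤ g t := by
      have := hY.g_mono (mem_Ici.2 le_rfl) (mem_Ici.2 ht0) ht0
      rwa [hY.g_zero] at this
    rw [div_le_iff₀ (by positivity), mul_assoc, ← Real.rpow_add hd]
    calc G t ≤ t * g t := hY.le_mul ht0
      _ ≤ (L * d ^ (1 - s)) * g L := by gcongr
      _ = L * g L * d ^ (1 - s - N + N) := by rw [sub_add_cancel]; ring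
  · refine le_add_left (ENNReal.ofReal_le_ofReal ?_)
    have hd1 : 1 ≤ d := not_lt.1 h
    have ht1 : t ≤ 1 :=
      div_le_one_of_le₀ ((hb x y).trans (Real.one_le_rpow hd1 hs0.le)) (by positivity)
    have hG1 : G t ≤ G 1 := hY.monotoneOn ht0 (mem_Ici.2 zero_le_one) ht1
    have hGt : 0 ≤ G t := by
      have := hY.monotoneOn (mem_Ici.2 le_rfl) (mem_Ici.2 ht0) ht0
      rwa [hY.map_zero] at this
    exact (div_le_self hGt (Real.one_le_rpow hd1 (Nat.cast_nonneg N))).trans hG1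

lemma lintegral_ball_rpow_lt_top (hN : 1 ≤ N) (hs : s < 1) (c : ℝ) :
    ∫⁻ z, (ball (0 : EuclideanSpace ℝ (Fin N)) 1).indicator
      (fun z => ENNReal.ofReal (c * ‖z‖ ^ (1 - s - N))) z < ⊤ := by
  have : Nonempty (Fin N) := ⟨⟨0, hN⟩⟩
  rw [lintegral_indicator measurableSet_ball]
  refine IntegrableOn.setLIntegral_lt_top (Integrable.const_mul ?_ c)
  refine (integrableOn_fun_norm_addHaar volume (f := fun y => y ^ (1 - s - N))).2 ?_
  have h := (intervalIntegral.integrableOn_Ioo_rpow_iff (s := -s) zero_lt_one).2 (by linarith)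
  refine h.congr_fun (fun y hy => ?_) measurableSet_Ioo
  simp only [finrank_euclideanSpace_fin, smul_eq_mul]
  rw [← Real.rpow_natCast, ← Real.rpow_add hy.1, Nat.cast_sub hN]
  congr 1
  push_cast
  ring

lemma exists_setLIntegral_orliczKernel_le (hN : 1 ≤ N) (hs : s ∈ Ioo (0 : ℝ) 1)
    (hY : IsYoungPair G g) {L : NNReal} (hL : LipschitzWith L v) (hb : ∀ x y, |v x - v y| ≤ 1)
    {A : Set (EuclideanSpace ℝ (Fin N))} (hA : volume A < ⊤) :
    ∃ C < ⊤, ∀ x, ∫⁻ y in A, orliczKernel s G v x y ≤ C := by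
  refine ⟨_, ENNReal.add_lt_top.2 ⟨lintegral_ball_rpow_lt_top hN hs.2 (L * g L),
    ENNReal.mul_lt_top (ENNReal.ofReal_lt_top (r := G 1)) hA⟩, fun x => ?_⟩
  calc ∫⁻ y in A, orliczKernel s G v x y
      ≤ ∫⁻ y in A, ((ball 0 1).indicator
          (fun z => ENNReal.ofReal (L * g L * ‖z‖ ^ (1 - s - N))) (y - x) +
        ENNReal.ofReal (G 1)) := lintegral_mono fun y => orliczKernel_le hs hY hL hb x y
    _ ≤ _ := by
      rw [lintegral_add_right _ measurable_const, setLIntegral_const]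
      exact add_le_add_left ((setLIntegral_le_lintegral _ _).trans_eq
        (lintegral_sub_right_eq_self (μ := volume) _ x)) _

lemma fracSeminorm_lt_top (hN : 1 ≤ N) (hs : s ∈ Ioo (0 : ℝ) 1)
    (hY : IsYoungPair G g) {L : NNReal} (hL : LipschitzWith L v) (hb : ∀ x y, |v x - v y| ≤ 1)
    {A : Set (EuclideanSpace ℝ (Fin N))} (hA : volume A < ⊤) :
    fracSeminorm s G v A A < ⊤ := by
  obtain ⟨C, hC, h⟩ := exists_setLIntegral_orliczKernel_le hN hs hY hL hb hA
  calc fracSeminorm s G v A A ≤ ∫⁻ _ in A, C := lintegral_mono h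
    _ = C * volume A := setLIntegral_const _ _
    _ < ⊤ := ENNReal.mul_lt_top hC hA

lemma fracSeminorm_eq_add (hY : IsYoungPair G g) (hv : Measurable v)
    {A b : Set (EuclideanSpace ℝ (Fin N))} (hA : MeasurableSet A) (hb : MeasurableSet b)
    (hbA : b ⊆ A) (h0 : ∀ x ∉ b, v x = 0) :
    fracSeminorm s G v A A = fracSeminorm s G v b b +
      2 * ∫⁻ y in A \ b, ∫⁻ x in b, orliczKernel s G v y x := by
  have hk := measurable_orliczKernel (s := s) hY hv
  have split (f : EuclideanSpace ℝ (Fin N) → ℝ≥0∞) :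
      ∫⁻ x in A, f x = (∫⁻ x in b, f x) + ∫⁻ x in A \ b, f x := by
    rw [← lintegral_inter_add_sdiff f A hb, inter_eq_self_of_subset_right hbA]
  have hin : ∀ x ∈ A \ b, ∫⁻ y in A, orliczKernel s G v x y =
      ∫⁻ y in b, orliczKernel s G v x y := by
    intro x hx
    rw [split, setLIntegral_congr_fun (g := fun _ => 0) (hA.diff hb)
      fun y hy => orliczKernel_eq_zero hY ((h0 x hx.2).trans (h0 y hy.2).symm)]
    simp
  have hswap : ∫⁻ x in b, ∫⁻ y in A \ b, orliczKernel s G v x y =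
      ∫⁻ y in A \ b, ∫⁻ x in b, orliczKernel s G v y x := by
    rw [lintegral_lintegral_swap hk.aemeasurable]
    simp only [orliczKernel_comm]
  calc fracSeminorm s G v A A
      = (∫⁻ x in b, ((∫⁻ y in b, orliczKernel s G v x y) +
          ∫⁻ y in A \ b, orliczKernel s G v x y)) +
        ∫⁻ x in A \ b, ∫⁻ y in b, orliczKernel s G v x y := by
        rw [← setLIntegral_congr_fun (hA.diff hb) hin]
        simp only [← split]
        rfl
    _ = _ := by
        rw [lintegral_add_left (Measurable.lintegral_prod_right hk), hswap, add_assoc, ← two_mul]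
        rfl

end Kernel

section Radial

variable {N : ℕ} {s : ℝ} {G g : ℝ → ℝ} {v : EuclideanSpace ℝ (Fin N) → ℝ} {r : ℝ}

lemma setLIntegral_orliczKernel_eq_of_norm_eq
    (hv : ∀ x y : EuclideanSpace ℝ (Fin N), ‖x‖ = ‖y‖ → v x = v y)
    {y z : EuclideanSpace ℝ (Fin N)} (hyz : ‖y‖ = ‖z‖) :
    ∫⁻ x in ball 0 r, orliczKernel s G v y x = ∫⁻ x in ball 0 r, orliczKernel s G v z x := by
  obtain ⟨e, rfl⟩ : ∃ e : EuclideanSpace ℝ (Fin N) ≃ₗᵢ[ℝ] EuclideanSpace ℝ (Fin N), e y = z :=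
    ⟨_, Submodule.reflection_sub hyz⟩
  rw [← e.measurePreserving.setLIntegral_comp_preimage_emb
    e.toHomeomorph.measurableEmbedding (orliczKernel s G v (e y)) (ball 0 r)]
  have : e ⁻¹' ball 0 r = ball 0 r := by ext; simp
  rw [this]
  refine lintegral_congr fun x => ?_
  simp only [orliczKernel, e.dist_map, hv (e y) y (e.norm_map y), hv (e x) x (e.norm_map x)]

lemma dist_lt_dist_smul {x z : EuclideanSpace ℝ (Fin N)} {c : ℝ} (hc : c < 1)
    (hx : ‖x‖ < c * ‖z‖) : dist (c • z) x < dist z x := by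
  have hz : 0 < ‖z‖ := by
    by_contra! h
    have : ‖z‖ = 0 := le_antisymm h (norm_nonneg z)
    rw [this] at hx
    linarith [norm_nonneg x]
  have hin : inner ℝ z x ≤ ‖z‖ * ‖x‖ := real_inner_le_norm z x
  rw [dist_eq_norm, dist_eq_norm, ← sq_lt_sq₀ (norm_nonneg _) (norm_nonneg _),
    norm_sub_sq_real, norm_sub_sq_real, norm_smul, real_inner_smul_left, mul_pow,
    Real.norm_eq_abs, sq_abs]
  have h1 : ‖z‖ * ‖x‖ < ‖z‖ * (c * ‖z‖) := by gcongr
  nlinarith [mul_pos hz hz, mul_pos (sub_pos.2 hc) (sub_pos.2 h1),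
    mul_nonneg (sub_pos.2 hc).le (sub_nonneg.2 hin),
    mul_pos (mul_pos (sub_pos.2 hc) (sub_pos.2 hc)) (mul_pos hz hz)]

lemma orliczKernel_lt_of_dist_lt (hs : 0 < s) (hN : 1 ≤ N) (hY : IsYoungPair G g) {pm pp : ℝ}
    (hG : GrowthCond G g pm pp) {x y z : EuclideanSpace ℝ (Fin N)} (hyz : v y = v z)
    (hxz : v z ≠ v x) (hd : dist y x < dist z x) :
    orliczKernel s G v z x < orliczKernel s G v y x := by
  have hy : 0 < dist y x := dist_pos.2 fun h => hxz (by rw [← hyz, h])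
  have hz := hy.trans hd
  have ha : 0 < |v z - v x| := abs_pos.2 (sub_ne_zero.2 hxz)
  unfold orliczKernel
  rw [hyz]
  have hpos : 0 < G (|v z - v x| / dist y x ^ s) := hY.pos hG (by positivity)
  refine (ENNReal.ofReal_lt_ofReal_iff (by positivity)).2 ?_
  calc G (|v z - v x| / dist z x ^ s) / dist z x ^ (N : ℝ)
      ≤ G (|v z - v x| / dist y x ^ s) / dist z x ^ (N : ℝ) := by
        gcongr
        exact hY.monotoneOn (mem_Ici.2 (by positivity)) (mem_Ici.2 (by positivity)) (by gcongr)
    _ < G (|v z - v x| / dist y x ^ s) / dist y x ^ (N : ℝ) := by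
        gcongr

/-- The potential generated by a radial function supported in a ball is radially strictly
decreasing outside this ball. -/
lemma setLIntegral_orliczKernel_lt (hs : 0 < s) (hN : 1 ≤ N) (hY : IsYoungPair G g) {pm pp : ℝ}
    (hG : GrowthCond G g pm pp) (hvm : Measurable v)
    (hv : ∀ x y : EuclideanSpace ℝ (Fin N), ‖x‖ = ‖y‖ → v x = v y)
    (hr : 0 < r) (hpos : ∀ x ∈ ball (0 : EuclideanSpace ℝ (Fin N)) r, v x ≠ 0)
    (h0 : ∀ x ∉ ball (0 : EuclideanSpace ℝ (Fin N)) r, v x = 0)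
    {y z : EuclideanSpace ℝ (Fin N)} (hy : r ≤ ‖y‖) (hyz : ‖y‖ < ‖z‖)
    (hfin : ∫⁻ x in ball 0 r, orliczKernel s G v z x ≠ ⊤) :
    ∫⁻ x in ball 0 r, orliczKernel s G v z x < ∫⁻ x in ball 0 r, orliczKernel s G v y x := by
  have hz : 0 < ‖z‖ := hr.trans_le (hy.trans hyz.le)
  set c := ‖y‖ / ‖z‖ with hc
  have hcz : c * ‖z‖ = ‖y‖ := div_mul_cancel₀ _ hz.ne'
  have hc1 : c < 1 := (div_lt_one hz).2 hyz
  have hnorm : ‖c • z‖ = ‖y‖ := by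
    rw [norm_smul, Real.norm_of_nonneg (by positivity), hcz]
  rw [← setLIntegral_orliczKernel_eq_of_norm_eq hv hnorm]
  have hvz : v z = 0 := h0 z (by simpa using hy.trans hyz.le)
  have hvc : v (c • z) = 0 := h0 _ (by simpa [hnorm] using hy)
  have hm : Measurable (orliczKernel s G v (c • z)) :=
    (measurable_orliczKernel hY hvm).of_uncurry_left
  refine setLIntegral_strict_mono measurableSet_ball (measure_ball_pos _ _ hr).ne' hm hfin
    (ae_of_all _ fun x hx => ?_)
  refine orliczKernel_lt_of_dist_lt hs hN hY hG (hvc.trans hvz.symm) ?_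
    (dist_lt_dist_smul hc1 (by rw [hcz]; exact (mem_ball_zero_iff.1 hx).trans_le hy))
  rw [hvz]
  exact (hpos x hx).symm

end Radial

lemma setLIntegral_lt_setLIntegral_of_lt_of_le {α : Type*} [MeasurableSpace α] {μ : Measure α}
    {K : α → ℝ≥0∞} (hK : Measurable K) {D E : Set α} (hD : MeasurableSet D)
    (hE : MeasurableSet E) (hDE : μ D = μ E) (hE0 : μ E ≠ 0) (hEtop : μ E ≠ ⊤) {κ : ℝ≥0∞}
    (hκ : κ ≠ ⊤) (hKD : ∀ x ∈ D, K x ≤ κ) (hKE : ∀ x ∈ E, κ < K x) :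
    ∫⁻ x in D, K x ∂μ < ∫⁻ x in E, K x ∂μ :=
  calc ∫⁻ x in D, K x ∂μ ≤ ∫⁻ _ in D, κ ∂μ := setLIntegral_mono' hD hKD
    _ = ∫⁻ _ in E, κ ∂μ := by rw [setLIntegral_const, setLIntegral_const, hDE]
    _ < ∫⁻ x in E, K x ∂μ :=
      setLIntegral_strict_mono hE hE0 hK
        (by rw [setLIntegral_const]; exact ENNReal.mul_ne_top hκ hEtop) (ae_of_all _ hKE)

/-- Among sets of given finite measure containing the support of a radial bump, the centered ball
strictly maximizes the seminorm. -/
lemma fracSeminorm_lt_fracSeminorm_ball {N : ℕ} {s : ℝ} {G g : ℝ → ℝ}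
    {v : EuclideanSpace ℝ (Fin N) → ℝ} {r R : ℝ} (hs : s ∈ Ioo (0 : ℝ) 1) (hN : 1 ≤ N)
    (hY : IsYoungPair G g) {pm pp : ℝ} (hG : GrowthCond G g pm pp)
    {L : NNReal} (hL : LipschitzWith L v) (hb : ∀ x y, |v x - v y| ≤ 1)
    (hv : ∀ x y : EuclideanSpace ℝ (Fin N), ‖x‖ = ‖y‖ → v x = v y)
    (hr : 0 < r) (hrR : r ≤ R) (hpos : ∀ x ∈ ball (0 : EuclideanSpace ℝ (Fin N)) r, v x ≠ 0)
    (h0 : ∀ x ∉ ball (0 : EuclideanSpace ℝ (Fin N)) r, v x = 0)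
    {A : Set (EuclideanSpace ℝ (Fin N))} (hA : MeasurableSet A) (hrA : ball 0 r ⊆ A)
    (hvol : volume A = volume (ball (0 : EuclideanSpace ℝ (Fin N)) R))
    (hne : volume (ball 0 R \ A) ≠ 0) :
    fracSeminorm s G v A A < fracSeminorm s G v (ball 0 R) (ball 0 R) := by
  have : Nonempty (Fin N) := ⟨⟨0, hN⟩⟩
  have hvm : Measurable v := hL.continuous.measurable
  have hBm : MeasurableSet (ball (0 : EuclideanSpace ℝ (Fin N)) R) := measurableSet_ball
  have hrB : ball (0 : EuclideanSpace ℝ (Fin N)) r ⊆ ball 0 R := ball_subset_ball hrR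
  have hAtop : volume A < ⊤ := hvol ▸ measure_ball_lt_top
  have hΦ := fracSeminorm_lt_top hN hs hY hL hb hAtop
  obtain ⟨C, hC, hKC⟩ := exists_setLIntegral_orliczKernel_le hN hs hY hL hb
    (measure_ball_lt_top (μ := volume) (x := (0 : EuclideanSpace ℝ (Fin N))) (r := r))
  set K : EuclideanSpace ℝ (Fin N) → ℝ≥0∞ := fun y =>
    ∫⁻ x in ball 0 r, orliczKernel s G v y x
  have hKfin (y) : K y ≠ ⊤ := ((hKC y).trans_lt hC).ne
  have hKm : Measurable K := Measurable.lintegral_prod_right (measurable_orliczKernel hY hvm)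
  have hKlt {y z : EuclideanSpace ℝ (Fin N)} (hy : r ≤ ‖y‖) (hyz : ‖y‖ < ‖z‖) : K z < K y :=
    setLIntegral_orliczKernel_lt hs.1 hN hY hG hvm hv hr hpos h0 hy hyz (hKfin z)
  obtain ⟨w, hw⟩ := exists_norm_eq (EuclideanSpace ℝ (Fin N)) (hr.le.trans hrR)
  have key : ∫⁻ y in A \ ball 0 R, K y < ∫⁻ y in ball 0 R \ A, K y := by
    refine setLIntegral_lt_setLIntegral_of_lt_of_le hKm (hA.diff hBm) (hBm.diff hA) ?_ hne
      (measure_ne_top_of_subset sdiff_subset measure_ball_lt_top.ne) (hKfin w) ?_ ?_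
    · have h1 := measure_sdiff_add_inter (μ := volume) A hBm
      have h2 := measure_sdiff_add_inter (μ := volume) (ball (0 : EuclideanSpace ℝ (Fin N)) R) hA
      rw [hvol, ← h2, inter_comm] at h1
      exact (ENNReal.add_left_inj
        (measure_ne_top_of_subset inter_subset_right hAtop.ne)).1 h1
    · intro z hz
      have hz' : ‖w‖ ≤ ‖z‖ := by simpa [hw] using hz.2
      rcases hz'.eq_or_lt with h | h
      · exact (setLIntegral_orliczKernel_eq_of_norm_eq hv h.symm).le
      · exact (hKlt (hw ▸ hrR) h).le
    · intro y hy
      have hyr : y ∉ ball 0 r := fun h => hy.2 (hrA h)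
      exact hKlt (by simpa using hyr) (by simpa [hw] using hy.1)
  have hsplit {S T : Set (EuclideanSpace ℝ (Fin N))} (hT : MeasurableSet T)
      (hrT : ball 0 r ⊆ T) : ∫⁻ y in S \ ball 0 r, K y =
        (∫⁻ y in (S ∩ T) \ ball 0 r, K y) + ∫⁻ y in S \ T, K y := by
    rw [← lintegral_inter_add_sdiff K (S \ ball 0 r) hT, sdiff_sdiff,
      union_eq_self_of_subset_left hrT]
    congr 3
    ext
    simp only [mem_inter_iff, Set.mem_sdiff]
    tauto
  rw [fracSeminorm_eq_add hY hvm hA measurableSet_ball hrA h0] at hΦ ⊢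
  rw [fracSeminorm_eq_add hY hvm hBm measurableSet_ball hrB h0]
  change _ + 2 * ∫⁻ y in A \ ball 0 r, K y < ⊤ at hΦ
  change _ + 2 * ∫⁻ y in A \ ball 0 r, K y < _ + 2 * ∫⁻ y in ball 0 R \ ball 0 r, K y
  rw [ENNReal.add_lt_top, hsplit hBm hrB] at hΦ
  rw [hsplit (S := A) hBm hrB, hsplit (S := ball 0 R) hA hrA, inter_comm (ball 0 R) A]
  refine ENNReal.add_lt_add_left hΦ.1.ne ?_
  have hfin := (ENNReal.add_lt_top.1 (ENNReal.lt_top_of_mul_ne_top_right hΦ.2.ne two_ne_zero)).1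
  exact (ENNReal.mul_lt_mul_iff_right two_ne_zero ENNReal.ofNat_ne_top).2
    (ENNReal.add_lt_add_left hfin.ne key)

section Rearrangement

variable {N : ℕ}

lemma volume_ball_eq_ballVol_mul (hN : 1 ≤ N) (x : EuclideanSpace ℝ (Fin N)) {ρ : ℝ}
    (hρ : 0 ≤ ρ) : volume (ball x ρ) = ballVol N * ENNReal.ofReal (ρ ^ N) := by
  have : Nonempty (Fin N) := ⟨⟨0, hN⟩⟩
  rw [Measure.addHaar_ball volume x hρ, finrank_euclideanSpace_fin, mul_comm, ballVol]

lemma ballVol_ne_zero : ballVol N ≠ 0 := (measure_ball_pos _ _ one_pos).ne'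

lemma ballVol_ne_top : ballVol N ≠ ⊤ := measure_ball_lt_top.ne

lemma exists_rearrangeSet_eq_ball (hN : 1 ≤ N) {Ω : Set (EuclideanSpace ℝ (Fin N))}
    (h0 : volume Ω ≠ 0) (htop : volume Ω ≠ ⊤) :
    ∃ R > 0, rearrangeSet Ω = ball 0 R ∧
      volume Ω = volume (ball (0 : EuclideanSpace ℝ (Fin N)) R) := by
  have hq : 0 < (volume Ω).toReal / (ballVol N).toReal :=
    div_pos (ENNReal.toReal_pos h0 htop) (ENNReal.toReal_pos ballVol_ne_zero ballVol_ne_top)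
  refine ⟨_, Real.rpow_pos_of_pos hq _, rfl, ?_⟩
  rw [volume_ball_eq_ballVol_mul hN _ (by positivity),
    Real.rpow_inv_natCast_pow hq.le (by omega), ← ENNReal.toReal_div,
    ENNReal.ofReal_toReal (ENNReal.div_ne_top htop ballVol_ne_zero),
    ENNReal.mul_div_cancel ballVol_ne_zero ballVol_ne_top]

/-- The rearrangement of a radially decreasing profile about `a` recenters it at the origin. -/
lemma rearrangeFun_radial (hN : 1 ≤ N) {f : ℝ → ℝ} (hf : Continuous f)
    (hanti : AntitoneOn f (Ici 0)) (hpos : ∀ t, 0 ≤ f t) (a x : EuclideanSpace ℝ (Fin N)) :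
    rearrangeFun (fun y => f ‖y - a‖) x = f ‖x‖ := by
  have hset : {t : ℝ | 0 < t ∧ ballVol N * ENNReal.ofReal (‖x‖ ^ N) <
      volume {y : EuclideanSpace ℝ (Fin N) | t < f ‖y - a‖}} = Ioo 0 (f ‖x‖) := by
    ext t
    refine and_congr_right fun ht => ⟨fun h => ?_, fun h => ?_⟩
    · by_contra! hle
      refine h.not_ge ((measure_mono fun y hy => ?_).trans_eq
        (volume_ball_eq_ballVol_mul hN a (norm_nonneg x)))
      rw [mem_ball, dist_eq_norm]
      by_contra! hxy
      exact hy.not_ge ((hanti (norm_nonneg x) (norm_nonneg _) hxy).trans hle)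
    · obtain ⟨ρ, hρx, hρ⟩ : ∃ ρ > ‖x‖, t < f ρ :=
        ((eventually_mem_nhdsWithin (a := ‖x‖) (s := Ioi ‖x‖)).and
          ((hf.continuousAt.eventually (lt_mem_nhds h)).filter_mono nhdsWithin_le_nhds)).exists
      have hρ0 : 0 ≤ ρ := (norm_nonneg x).trans hρx.le
      calc ballVol N * ENNReal.ofReal (‖x‖ ^ N) < ballVol N * ENNReal.ofReal (ρ ^ N) := by
            refine (ENNReal.mul_lt_mul_iff_right ballVol_ne_zero ballVol_ne_top).2 ?_
            exact (ENNReal.ofReal_lt_ofReal_iff (pow_pos ((norm_nonneg x).trans_lt hρx) N)).2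
              (pow_lt_pow_left₀ hρx (norm_nonneg x) (by omega))
        _ = volume (ball a ρ) := (volume_ball_eq_ballVol_mul hN a hρ0).symm
        _ ≤ _ := measure_mono fun y hy => hρ.trans_le <|
            hanti (norm_nonneg _) hρ0 (by rw [← dist_eq_norm]; exact (mem_ball.1 hy).le)
  rw [rearrangeFun, hset]
  rcases (hpos ‖x‖).eq_or_lt with h | h
  · simp [← h]
  · exact csSup_Ioo h

end Rearrangement

/-- An open set having the volume of a ball is not, up to null sets, the ball about each of its
points. -/
lemma exists_mem_volume_ball_diff_ne_zero {N : ℕ} (hN : 1 ≤ N)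
    {Ω : Set (EuclideanSpace ℝ (Fin N))} (hΩ : IsOpen Ω) (hne : Ω.Nonempty) {R : ℝ} (hR : 0 < R)
    (hvol : volume Ω = volume (ball (0 : EuclideanSpace ℝ (Fin N)) R)) :
    ∃ a ∈ Ω, volume (ball a R \ Ω) ≠ 0 := by
  have : Nonempty (Fin N) := ⟨⟨0, hN⟩⟩
  by_contra! h
  obtain ⟨x, hx⟩ := hne
  obtain ⟨ε, hε, hball⟩ := Metric.isOpen_iff.1 hΩ x hx
  obtain ⟨e, he⟩ := exists_norm_eq (EuclideanSpace ℝ (Fin N)) zero_le_one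
  set y := x + (ε / 2) • e with hy
  have hyΩ : y ∈ Ω := hball <| by
    simp [hy, norm_smul, he, abs_of_pos hε, hε]
  set U := ball y R \ closedBall x R
  have hUo : IsOpen U := isOpen_ball.sdiff isClosed_closedBall
  have hUne : U.Nonempty := by
    have h1 := min_le_left (ε / 4) R
    have h2 := min_le_right (ε / 4) R
    have h3 : 0 < min (ε / 4) R := lt_min (by positivity) hR
    set t := R - min (ε / 4) R
    refine ⟨y + t • e, ?_, ?_⟩
    · rw [mem_ball, dist_eq_norm, add_sub_cancel_left, norm_smul, he, Real.norm_of_nonneg] <;>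
        linarith
    · rw [mem_closedBall, dist_eq_norm, hy, add_assoc, add_sub_cancel_left, ← add_smul, norm_smul,
        he, Real.norm_of_nonneg] <;> linarith
  have hdisj : Disjoint (ball x R) U :=
    disjoint_sdiff_right.mono_left ball_subset_closedBall
  have hle : volume (ball x R ∪ U) ≤ volume Ω := by
    refine measure_mono_ae (ae_le_set.2 (le_antisymm ?_ zero_le))
    calc volume ((ball x R ∪ U) \ Ω) ≤ volume ((ball x R \ Ω) ∪ (ball y R \ Ω)) := by
          rw [union_sdiff_distrib]
          gcongr
          exact sdiff_subset
      _ ≤ 0 := (measure_union_le _ _).trans_eq (by rw [h x hx, h y hyΩ, add_zero])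
  rw [measure_union hdisj hUo.measurableSet, hvol, Measure.addHaar_ball_center volume x R] at hle
  have hpos := hUo.measure_pos volume hUne
  exact hle.not_gt (ENNReal.lt_add_right measure_ball_lt_top.ne hpos.ne')

lemma fracSeminorm_comp_sub {N : ℕ} (s : ℝ) (G : ℝ → ℝ) (v : EuclideanSpace ℝ (Fin N) → ℝ)
    (a : EuclideanSpace ℝ (Fin N)) (Ω : Set (EuclideanSpace ℝ (Fin N))) :
    fracSeminorm s G (fun y => v (y - a)) Ω Ω =
      fracSeminorm s G v ((· + a) ⁻¹' Ω) ((· + a) ⁻¹' Ω) := by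
  have key (f : EuclideanSpace ℝ (Fin N) → ℝ≥0∞) :
      ∫⁻ x in Ω, f x = ∫⁻ x in (· + a) ⁻¹' Ω, f (x + a) :=
    ((measurePreserving_add_right volume a).setLIntegral_comp_preimage_emb
      (measurableEmbedding_addRight a) f Ω).symm
  simp only [fracSeminorm, key, add_sub_cancel_right, dist_add_right]

/-- A smooth radial profile, positive exactly on the ball of radius `r`. -/
noncomputable def bumpProfile (r t : ℝ) : ℝ := Real.smoothTransition (r ^ 2 - t ^ 2)

section Bump

variable {N : ℕ} {r : ℝ}

lemma bumpProfile_eq_zero_iff (hr : 0 ≤ r) {t : ℝ} (ht : 0 ≤ t) :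
    bumpProfile r t = 0 ↔ r ≤ t := by
  rw [bumpProfile, Real.smoothTransition.zero_iff_nonpos, sub_nonpos, sq_le_sq₀ hr ht]

lemma bumpProfile_antitoneOn : AntitoneOn (bumpProfile r) (Ici 0) := fun _ ha _ _ hab =>
  Real.smoothTransition.monotone (sub_le_sub_left (pow_le_pow_left₀ ha hab 2) _)

lemma continuous_bumpProfile : Continuous (bumpProfile r) :=
  Real.smoothTransition.continuous.comp (by fun_prop)

lemma contDiff_bumpProfile_norm (a : EuclideanSpace ℝ (Fin N)) :
    ContDiff ℝ (⊤ : ℕ∞) fun y => bumpProfile r ‖y - a‖ :=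
  Real.smoothTransition.contDiff.comp
    (contDiff_const.sub ((contDiff_id.sub contDiff_const).norm_sq ℝ))

lemma tsupport_bumpProfile_norm_subset (hr : 0 ≤ r) (a : EuclideanSpace ℝ (Fin N)) :
    tsupport (fun y => bumpProfile r ‖y - a‖) ⊆ closedBall a r := by
  refine closure_minimal (fun y hy => ?_) isClosed_closedBall
  rw [mem_closedBall, dist_eq_norm]
  by_contra! h
  exact hy ((bumpProfile_eq_zero_iff hr (norm_nonneg _)).2 h.le)

end Bump

/-- failure of the Pólya–Szegő inequality on domains. -/
theorem polya_szego_fails_on_domains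
    {N : ℕ} (hN : 1 ≤ N) {s : ℝ} (hs : s ∈ Set.Ioo (0 : ℝ) 1)
    {G g : ℝ → ℝ} (hY : IsYoungPair G g) {pm pp : ℝ} (hG : GrowthCond G g pm pp)
    {Ω : Set (EuclideanSpace ℝ (Fin N))} (hΩopen : IsOpen Ω) (hΩne : Ω.Nonempty)
    (hΩfin : volume Ω < ⊤) :
    ∃ u : EuclideanSpace ℝ (Fin N) → ℝ, IsTestFun Ω u ∧ (∀ x, 0 ≤ u x) ∧
      fracSeminorm s G u Ω Ω <
        fracSeminorm s G (rearrangeFun u) (rearrangeSet Ω) (rearrangeSet Ω) := by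
  have hΩ0 : volume Ω ≠ 0 := (hΩopen.measure_pos volume hΩne).ne'
  obtain ⟨R, hR, hball, hvol⟩ := exists_rearrangeSet_eq_ball hN hΩ0 hΩfin.ne
  obtain ⟨a, ha, hdiff⟩ := exists_mem_volume_ball_diff_ne_zero hN hΩopen hΩne hR hvol
  obtain ⟨ε, hε, hεΩ⟩ := Metric.nhds_basis_closedBall.mem_iff.1 (hΩopen.mem_nhds ha)
  set r := min ε R
  have hr : 0 < r := lt_min hε hR
  have hrΩ : closedBall a r ⊆ Ω := (closedBall_subset_closedBall (min_le_left _ _)).trans hεΩ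
  have hsupp (c : EuclideanSpace ℝ (Fin N)) :
      HasCompactSupport fun y => bumpProfile r ‖y - c‖ :=
    (isCompact_closedBall c r).of_isClosed_subset (isClosed_tsupport _)
      (tsupport_bumpProfile_norm_subset hr.le c)
  have hnonneg (t : ℝ) : 0 ≤ bumpProfile r t := Real.smoothTransition.nonneg _
  refine ⟨fun y => bumpProfile r ‖y - a‖, ⟨contDiff_bumpProfile_norm a, hsupp a,
    (tsupport_bumpProfile_norm_subset hr.le a).trans hrΩ⟩, fun x => hnonneg _, ?_⟩
  rw [hball, funext (rearrangeFun_radial hN continuous_bumpProfile bumpProfile_antitoneOn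
    hnonneg a), fracSeminorm_comp_sub s G (fun y => bumpProfile r ‖y‖)]
  obtain ⟨L, hL⟩ : ∃ L, LipschitzWith L fun y : EuclideanSpace ℝ (Fin N) => bumpProfile r ‖y‖ := by
    simpa using ContDiff.lipschitzWith_of_hasCompactSupport (hsupp 0)
      (contDiff_bumpProfile_norm (0 : EuclideanSpace ℝ (Fin N))) (by simp)
  refine fracSeminorm_lt_fracSeminorm_ball hs hN hY hG hL (fun x y => ?_)
    (fun x y hxy => by simp only [hxy]) hr (min_le_right _ _) (fun x hx => ?_) (fun x hx => ?_)
    (hΩopen.measurableSet.preimage (measurable_add_const a)) (fun x hx => hrΩ ?_) ?_ ?_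
  · exact abs_sub_le_of_nonneg_of_le (hnonneg _) (Real.smoothTransition.le_one _) (hnonneg _)
      (Real.smoothTransition.le_one _)
  · rw [Ne, bumpProfile_eq_zero_iff hr.le (norm_nonneg _)]
    simpa using hx
  · rw [bumpProfile_eq_zero_iff hr.le (norm_nonneg _)]
    simpa using hx
  · simpa using (mem_ball_zero_iff.1 hx).le
  · rw [measure_preimage_add_right, hvol]
  · have hpre : ball 0 R \ (· + a) ⁻¹' Ω = (· + a) ⁻¹' (ball a R \ Ω) := by
      ext x
      simp
    rwa [hpre, measure_preimage_add_right]
end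

section
/- Let N ≥ 1, s ∈ (0,1), let G be a Young function satisfying the growth condition with exponents 1 < p⁻ ≤ p⁺ < ∞, and let Ω ⊆ ℝ^N be a nonempty open set with |Ω| < ∞ and δ(x) := dist(x, ∂Ω). Assume: (i) there is c₁ > 0 such that ∫_{ℝ^N∖Ω} |x−y|^{−(N+sp⁻)} dy ≤ c₁ δ(x)^{−sp⁻} for every x ∈ Ω, and (ii) there is c₂ > 0 such that ∫_Ω G(u(x)/δ(x)^s) dx ≤ c₂ ∬_{Ω×Ω} G(|u(x)−u(y)|/|x−y|^s) |x−y|^{−N} dx dy for every nonnegative u ∈ C_c^∞(Ω). Then there exists C > 0 such that for every nonnegative u ∈ C_c^∞(Ω), ∬_{Ω*×Ω*} G(|u*(x)−u*(y)|/|x−y|^s) |x−y|^{−N} dx dy ≤ C ∬_{Ω×Ω} G(|u(x)−u(y)|/|x−y|^s) |x−y|^{−N} dx dy. -/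
open MeasureTheory Metric Set Filter
open scoped ENNReal Topology

namespace IsYoungPair

variable {G g : ℝ → ℝ}

lemma g_nonneg (hY : IsYoungPair G g) {t : ℝ} (ht : 0 ≤ t) : 0 ≤ g t := by
  rcases ht.eq_or_lt with rfl | h
  · exact hY.g_zero.ge
  · exact (hY.g_pos t h).le

lemma nonneg (hY : IsYoungPair G g) {t : ℝ} (ht : 0 ≤ t) : 0 ≤ G t := by
  simpa [hY.map_zero] using hY.monotoneOn (mem_Ici.2 le_rfl) (mem_Ici.2 ht) ht

lemma hasDerivWithinAt (hY : IsYoungPair G g) {t : ℝ} (ht : 0 ≤ t) :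
    HasDerivWithinAt G (g t) (Ici t) t := by
  have hmeas : StronglyMeasurableAtFilter g (𝓝[Ioi t] t) := by
    refine ⟨Ioc t (t + 1), Ioc_mem_nhdsGT (by linarith), ?_⟩
    exact ((intervalIntegrable_iff_integrableOn_Ioc_of_le (by linarith)).1
      (hY.intervalIntegrable ht (by linarith : (0 : ℝ) ≤ t + 1))).aestronglyMeasurable
  have h := intervalIntegral.integral_hasDerivWithinAt_right (s := Ici t) (t := Ioi t)
    (hY.intervalIntegrable le_rfl ht) hmeas ((hY.g_rightCont t ht).mono Ioi_subset_Ici_self)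
  exact h.congr (fun x hx => hY.G_eq x (ht.trans hx)) (hY.G_eq t ht)

lemma continuousOn_Icc (hY : IsYoungPair G g) {a b : ℝ} (ha : 0 ≤ a) :
    ContinuousOn G (Icc a b) := by
  rcases le_or_gt a b with hab | hab
  · have hb : 0 ≤ b := ha.trans hab
    have h := intervalIntegral.continuousOn_primitive_interval
      ((intervalIntegrable_iff').1 (hY.intervalIntegrable (le_refl (0 : ℝ)) hb))
    rw [uIcc_of_le hb] at h
    exact (h.congr fun x hx => hY.G_eq x hx.1).mono (Icc_subset_Icc_left ha)
  · simp [Icc_eq_empty_of_lt hab]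

lemma hasDerivWithinAt_mul_rpow (hY : IsYoungPair G g) (q : ℝ) {t : ℝ} (ht : 0 < t) :
    HasDerivWithinAt (fun x => G x * x ^ (-q)) (t ^ (-q - 1) * (t * g t - q * G t)) (Ici t) t := by
  have h := (hY.hasDerivWithinAt ht.le).mul
    (Real.hasDerivAt_rpow_const (x := t) (p := -q) (Or.inl ht.ne')).hasDerivWithinAt
  refine h.congr_deriv ?_
  have : t ^ (-q) = t ^ (-q - 1) * t := by
    rw [← Real.rpow_add_one ht.ne']; congr 1; ring
  rw [this]; ring

lemma continuousOn_mul_rpow (hY : IsYoungPair G g) (q : ℝ) {a b : ℝ} (ha : 0 < a) :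
    ContinuousOn (fun x => G x * x ^ (-q)) (Icc a b) :=
  (hY.continuousOn_Icc ha.le).mul fun _ hx =>
    (Real.continuousAt_rpow_const _ _ (Or.inl (ha.trans_le hx.1).ne')).continuousWithinAt

variable {pm pp : ℝ}

lemma mul_rpow_le_mul_rpow (hY : IsYoungPair G g) (hG : GrowthCond G g pm pp) {a b : ℝ}
    (ha : 0 < a) (hab : a ≤ b) : G a * a ^ (-pm) ≤ G b * b ^ (-pm) := by
  have h := image_le_of_deriv_right_le_deriv_boundary (a := a) (b := b)
    (f := fun _ => G a * a ^ (-pm)) (f' := fun _ => 0) (B := fun x => G x * x ^ (-pm))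
    continuousOn_const (fun x _ => hasDerivWithinAt_const _ _ _) le_rfl
    (hY.continuousOn_mul_rpow pm ha)
    (fun x hx => hY.hasDerivWithinAt_mul_rpow pm (ha.trans_le hx.1))
    (fun x hx => by
      have hx0 : 0 < x := ha.trans_le hx.1
      have := (hG.2.2 x hx0).1
      exact mul_nonneg (Real.rpow_nonneg hx0.le _) (by linarith))
  exact h ⟨hab, le_rfl⟩

lemma mul_rpow_anti (hY : IsYoungPair G g) (hG : GrowthCond G g pm pp) {a b : ℝ}
    (ha : 0 < a) (hab : a ≤ b) : G b * b ^ (-pp) ≤ G a * a ^ (-pp) := by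
  have h := image_le_of_deriv_right_le_deriv_boundary (a := a) (b := b)
    (B := fun _ => G a * a ^ (-pp)) (B' := fun _ => 0) (f := fun x => G x * x ^ (-pp))
    (hY.continuousOn_mul_rpow pp ha)
    (fun x hx => hY.hasDerivWithinAt_mul_rpow pp (ha.trans_le hx.1)) le_rfl
    continuousOn_const (fun x _ => hasDerivWithinAt_const _ _ _)
    (fun x hx => by
      have hx0 : 0 < x := ha.trans_le hx.1
      have := (hG.2.2 x hx0).2
      exact mul_nonpos_of_nonneg_of_nonpos (Real.rpow_nonneg hx0.le _) (by linarith))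
  exact h ⟨hab, le_rfl⟩

/-- For `0 < l ≤ 1` one has `G (l t) ≤ l ^ pm * G t`. -/
lemma map_mul_le (hY : IsYoungPair G g) (hG : GrowthCond G g pm pp) {l t : ℝ}
    (hl : 0 < l) (hl1 : l ≤ 1) (ht : 0 ≤ t) : G (l * t) ≤ l ^ pm * G t := by
  rcases ht.eq_or_lt with rfl | ht
  · simp [hY.map_zero]
  have h := hY.mul_rpow_le_mul_rpow hG (mul_pos hl ht) (mul_le_of_le_one_left ht.le hl1)
  rw [Real.mul_rpow hl.le ht.le, Real.rpow_neg hl.le, ← mul_assoc] at h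
  have h2 := le_of_mul_le_mul_right h (Real.rpow_pos_of_pos ht (-pm))
  rwa [← div_eq_mul_inv, div_le_iff₀ (Real.rpow_pos_of_pos hl _), mul_comm (G t)] at h2

/-- For `1 ≤ l` one has `G (l t) ≤ l ^ pp * G t`. -/
lemma map_mul_le_of_one_le (hY : IsYoungPair G g) (hG : GrowthCond G g pm pp) {l t : ℝ}
    (hl1 : 1 ≤ l) (ht : 0 ≤ t) : G (l * t) ≤ l ^ pp * G t := by
  have hl : 0 < l := by linarith
  rcases ht.eq_or_lt with rfl | ht
  · simp [hY.map_zero]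
  have h := hY.mul_rpow_anti hG ht (le_mul_of_one_le_left ht.le hl1)
  rw [Real.mul_rpow hl.le ht.le, Real.rpow_neg hl.le, ← mul_assoc] at h
  have h2 := le_of_mul_le_mul_right h (Real.rpow_pos_of_pos ht (-pp))
  rwa [← div_eq_mul_inv, div_le_iff₀ (Real.rpow_pos_of_pos hl _), mul_comm (G t)] at h2

end IsYoungPair

section NearMeasure

variable {N : ℕ} {E F : Set (EuclideanSpace ℝ (Fin N))} {ρ : ℝ}

/-- The measure of the set of pairs `(x, y) ∈ E × Fᶜ` at distance less than `ρ`. -/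
noncomputable def nearMeasure (E F : Set (EuclideanSpace ℝ (Fin N))) (ρ : ℝ) : ℝ≥0∞ :=
  ∫⁻ x, volume {y | x ∈ E ∧ y ∉ F ∧ dist x y < ρ}

lemma nearMeasure_eq_lintegral_translate (hE : MeasurableSet E) (hF : MeasurableSet F) :
    nearMeasure E F ρ = ∫⁻ h in ball 0 ρ, volume {x | x ∈ E ∧ x + h ∉ F} := by
  set A : Set (EuclideanSpace ℝ (Fin N) × EuclideanSpace ℝ (Fin N)) :=
    {p | p.1 ∈ E ∧ p.1 + p.2 ∉ F ∧ ‖p.2‖ < ρ} with hA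
  have hAm : MeasurableSet A := by
    refine (measurable_fst hE).inter (MeasurableSet.inter ?_ ?_)
    · exact (measurable_fst.add measurable_snd) hF.compl
    · exact measurableSet_lt measurable_snd.norm measurable_const
  have h1 : nearMeasure E F ρ = (volume.prod volume) A := by
    rw [Measure.prod_apply hAm]
    refine lintegral_congr fun x => ?_
    rw [← measure_preimage_add volume x]
    congr 1
    ext h
    simp [hA]
  rw [h1, Measure.prod_apply_symm hAm, ← lintegral_indicator measurableSet_ball]
  refine lintegral_congr fun h => ?_
  by_cases hh : ‖h‖ < ρ <;> simp [hA, indicator, hh]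

lemma measure_translate_nsmul_le (E : Set (EuclideanSpace ℝ (Fin N))) (h : EuclideanSpace ℝ (Fin N)) (k : ℕ) :
    volume {x | x ∈ E ∧ x + (k : ℝ) • h ∉ E} ≤ k * volume {x | x ∈ E ∧ x + h ∉ E} := by
  induction k with
  | zero => simp
  | succ k ih =>
    have hsub : {x | x ∈ E ∧ x + ((k + 1 : ℕ) : ℝ) • h ∉ E} ⊆
        {x | x ∈ E ∧ x + (k : ℝ) • h ∉ E} ∪
          (fun x => x + (k : ℝ) • h) ⁻¹' {x | x ∈ E ∧ x + h ∉ E} := by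
      rintro x ⟨hx, hx'⟩
      by_cases hk : x + (k : ℝ) • h ∈ E
      · refine Or.inr ⟨hk, ?_⟩
        have hadd : x + (k : ℝ) • h + h = x + ((k + 1 : ℕ) : ℝ) • h := by
          push_cast
          module
        rwa [hadd]
      · exact Or.inl ⟨hx, hk⟩
    refine (measure_mono hsub).trans ((measure_union_le _ _).trans ?_)
    rw [measure_preimage_add_right]
    push_cast
    rw [add_mul, one_mul]
    gcongr

lemma nearMeasure_nsmul_le (hE : MeasurableSet E) {k : ℕ} (hk : 0 < k) :
    nearMeasure E E (k * ρ) ≤ (k : ℝ≥0∞) ^ (N + 1) * nearMeasure E E ρ := by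
  have hk' : (0 : ℝ) < k := by exact_mod_cast hk
  rw [nearMeasure_eq_lintegral_translate hE hE, nearMeasure_eq_lintegral_translate hE hE]
  set m : EuclideanSpace ℝ (Fin N) → ℝ≥0∞ := fun h => volume {x | x ∈ E ∧ x + h ∉ E} with hm
  have hmm : Measurable m := by
    have hAm : MeasurableSet {p : EuclideanSpace ℝ (Fin N) × EuclideanSpace ℝ (Fin N) |
        p.2 ∈ E ∧ p.2 + p.1 ∉ E} :=
      (measurable_snd hE).inter ((measurable_snd.add measurable_fst) hE.compl)
    exact measurable_measure_prodMk_left hAm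
  have hpre : (fun x : EuclideanSpace ℝ (Fin N) => (k : ℝ) • x) ⁻¹' ball 0 (k * ρ) = ball 0 ρ := by
    ext x
    simp [norm_smul, hk']
  have hscale : ∫⁻ h in ball 0 ρ, m ((k : ℝ) • h) =
      ENNReal.ofReal ((k : ℝ) ^ N)⁻¹ * ∫⁻ h in ball 0 (k * ρ), m h := by
    have hmap := Measure.map_addHaar_smul
      (volume : Measure (EuclideanSpace ℝ (Fin N))) hk'.ne'
    rw [finrank_euclideanSpace_fin] at hmap
    have := setLIntegral_map (μ := (volume : Measure (EuclideanSpace ℝ (Fin N))))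
      (measurableSet_ball (x := (0 : EuclideanSpace ℝ (Fin N))) (ε := k * ρ)) hmm
      (measurable_const_smul (k : ℝ))
    rw [hpre] at this
    rw [← this]
    change ∫⁻ h in ball 0 (k * ρ), m h ∂(Measure.map (fun x => (k : ℝ) • x) volume) = _
    rw [hmap, Measure.restrict_smul, lintegral_smul_measure, abs_of_pos (by positivity),
      smul_eq_mul]
  have hle : ∫⁻ h in ball 0 ρ, m ((k : ℝ) • h) ≤ k * ∫⁻ h in ball 0 ρ, m h := by
    rw [← lintegral_const_mul _ hmm]
    exact lintegral_mono fun h => measure_translate_nsmul_le E h k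
  rw [hscale] at hle
  have hkN : (k : ℝ≥0∞) ^ N * ENNReal.ofReal ((k : ℝ) ^ N)⁻¹ = 1 := by
    rw [ENNReal.ofReal_inv_of_pos (by positivity), ENNReal.ofReal_pow hk'.le,
      ENNReal.ofReal_natCast]
    exact ENNReal.mul_inv_cancel (by simp [hk.ne']) (by simp)
  calc ∫⁻ h in ball 0 (k * ρ), m h
      = (k : ℝ≥0∞) ^ N * (ENNReal.ofReal ((k : ℝ) ^ N)⁻¹ * ∫⁻ h in ball 0 (k * ρ), m h) := by
        rw [← mul_assoc, hkN, one_mul]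
    _ ≤ (k : ℝ≥0∞) ^ N * (k * ∫⁻ h in ball 0 ρ, m h) := by gcongr
    _ = _ := by rw [pow_succ, mul_assoc]

lemma le_nearMeasure (hE : MeasurableSet E) :
    volume E * (volume (ball (0 : EuclideanSpace ℝ (Fin N)) ρ) - volume F) ≤
      nearMeasure E F ρ := by
  rw [mul_comm, ← setLIntegral_const, ← lintegral_indicator hE, nearMeasure]
  refine lintegral_mono fun x => ?_
  by_cases hx : x ∈ E
  · simp only [indicator_of_mem hx, hx, true_and]
    rw [← Measure.addHaar_ball_center volume x ρ]
    refine (le_measure_sdiff).trans (measure_mono ?_)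
    intro y hy
    exact ⟨hy.2, by rw [dist_comm]; exact hy.1⟩
  · simp [hx]

lemma nearMeasure_le (hE : MeasurableSet E) :
    nearMeasure E F ρ ≤ volume E * volume (ball (0 : EuclideanSpace ℝ (Fin N)) ρ) := by
  rw [mul_comm, ← setLIntegral_const, ← lintegral_indicator hE, nearMeasure]
  refine lintegral_mono fun x => ?_
  by_cases hx : x ∈ E
  · simp only [indicator_of_mem hx, hx, true_and]
    rw [← Measure.addHaar_ball_center volume x ρ]
    refine measure_mono ?_
    intro y hy
    rw [mem_ball, dist_comm]; exact hy.2
  · simp [hx]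

lemma nearMeasure_self_le (hE : MeasurableSet E) (hF : MeasurableSet F) :
    nearMeasure E E ρ ≤
      nearMeasure E F ρ + volume (ball (0 : EuclideanSpace ℝ (Fin N)) ρ) * volume (F \ E) := by
  rw [nearMeasure_eq_lintegral_translate hE hE, nearMeasure_eq_lintegral_translate hE hF,
    mul_comm, ← setLIntegral_const, ← lintegral_add_right _ measurable_const]
  refine lintegral_mono fun h => ?_
  have hsub : {x | x ∈ E ∧ x + h ∉ E} ⊆
      {x | x ∈ E ∧ x + h ∉ F} ∪ (fun x => x + h) ⁻¹' (F \ E) := by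
    rintro x ⟨hx, hx'⟩
    by_cases hk : x + h ∈ F
    · exact Or.inr ⟨hk, hx'⟩
    · exact Or.inl ⟨hx, hk⟩
  refine (measure_mono hsub).trans ((measure_union_le _ _).trans ?_)
  rw [measure_preimage_add_right]

lemma nearMeasure_ball_eq_zero {r R : ℝ} (h : r + ρ ≤ R) :
    nearMeasure (ball (0 : EuclideanSpace ℝ (Fin N)) r) (ball 0 R) ρ = 0 := by
  have : ∀ x : EuclideanSpace ℝ (Fin N),
      {y | x ∈ ball 0 r ∧ y ∉ ball (0 : EuclideanSpace ℝ (Fin N)) R ∧ dist x y < ρ} = ∅ := by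
    intro x
    ext y
    simp only [mem_ofPred_eq, mem_empty_iff_false, iff_false, mem_ball]
    rintro ⟨h1, h2, h3⟩
    have := dist_triangle_left y 0 x
    exact h2 (by linarith)
  simp only [nearMeasure, this, measure_empty, lintegral_zero]

lemma nearMeasure_ball_le {r R : ℝ} (hrR : r ≤ R) :
    nearMeasure (ball (0 : EuclideanSpace ℝ (Fin N)) r) (ball 0 R) ρ ≤
      volume (ball (0 : EuclideanSpace ℝ (Fin N)) r \ ball 0 (r - ρ)) *
        volume (ball (0 : EuclideanSpace ℝ (Fin N)) ρ) := by
  refine le_trans (lintegral_mono fun x => ?_)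
    (nearMeasure_le (F := ball 0 R) (measurableSet_ball.diff measurableSet_ball))
  refine measure_mono ?_
  rintro y ⟨h1, h2, h3⟩
  refine ⟨⟨h1, fun h4 => h2 ?_⟩, h2, h3⟩
  rw [mem_ball] at *
  have := dist_triangle_left y 0 x
  linarith

lemma nearMeasure_mono_radius {ρ' : ℝ} (h : ρ ≤ ρ') : nearMeasure E F ρ ≤ nearMeasure E F ρ' :=
  lintegral_mono fun _ => measure_mono fun _ hy => ⟨hy.1, hy.2.1, hy.2.2.trans_le h⟩

lemma pow_sub_pow_le_mul {a b : ℝ} (ha : 0 ≤ a) (hab : a ≤ b) (n : ℕ) :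
    b ^ (n + 1) - a ^ (n + 1) ≤ (n + 1) * (b - a) * b ^ n := by
  induction n with
  | zero => simp
  | succ n ih =>
    have hpow : a ^ (n + 1) ≤ b ^ (n + 1) := pow_le_pow_left₀ ha hab _
    have hb : 0 ≤ b := ha.trans hab
    calc b ^ (n + 1 + 1) - a ^ (n + 1 + 1)
        = b * (b ^ (n + 1) - a ^ (n + 1)) + (b - a) * a ^ (n + 1) := by ring
      _ ≤ b * ((n + 1) * (b - a) * b ^ n) + (b - a) * b ^ (n + 1) := by
        gcongr
      _ = _ := by push_cast; ring

lemma ballVol_toReal_pos (N : ℕ) : 0 < (ballVol N).toReal :=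
  ENNReal.toReal_pos (measure_ball_pos _ _ one_pos).ne' measure_ball_lt_top.ne

lemma volume_ball_eq (hN : 1 ≤ N) {r : ℝ} (hr : 0 ≤ r) :
    volume (ball (0 : EuclideanSpace ℝ (Fin N)) r) =
      ENNReal.ofReal (r ^ N * (ballVol N).toReal) := by
  have : Nonempty (Fin N) := ⟨⟨0, hN⟩⟩
  rw [Measure.addHaar_ball _ _ hr, finrank_euclideanSpace_fin,
    ENNReal.ofReal_mul (by positivity), ENNReal.ofReal_toReal (show ballVol N ≠ ⊤ from measure_ball_lt_top.ne)]
  rfl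

/-- The dilation factor in `nearMeasure_ball_le_nearMeasure`. -/
def dilationFactor (N : ℕ) : ℝ := 6 * N * 2 ^ N + 2

lemma le_nearMeasure_self (hN : 1 ≤ N) (hE : MeasurableSet E) {r : ℝ} (hr : 0 < r)
    (hvE : volume E = volume (ball (0 : EuclideanSpace ℝ (Fin N)) r)) (hρ : 0 < ρ) (hρr : ρ ≤ r) :
    ENNReal.ofReal ((ballVol N).toReal ^ 2 * r ^ (N - 1) * ρ ^ (N + 1) / 6) ≤
      nearMeasure E E ρ := by
  obtain ⟨M, rfl⟩ : ∃ M, N = M + 1 := ⟨N - 1, by omega⟩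
  set w := (ballVol (M + 1)).toReal with hw
  have hw0 : 0 < w := ballVol_toReal_pos _
  have hfin : nearMeasure E E ρ ≠ ⊤ :=
    ((nearMeasure_le hE).trans_lt (ENNReal.mul_lt_top
      (by rw [hvE]; exact measure_ball_lt_top) measure_ball_lt_top)).ne
  set k : ℕ := ⌈2 * r / ρ⌉₊ with hk
  have hk0 : 0 < k := Nat.ceil_pos.2 (by positivity)
  have hkR : (0 : ℝ) < k := by exact_mod_cast hk0
  have hk1 : 2 * r ≤ k * ρ := (div_le_iff₀ hρ).1 (Nat.le_ceil _)
  have hk2 : k * ρ ≤ 3 * r := by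
    have := (Nat.ceil_lt_add_one (show 0 ≤ 2 * r / ρ by positivity)).le
    have h2 : (k : ℝ) * ρ ≤ (2 * r / ρ + 1) * ρ := by gcongr
    have h3 : (2 * r / ρ + 1) * ρ = 2 * r + ρ := by field_simp
    linarith
  have h := (le_nearMeasure (E := E) (F := E) (ρ := k * ρ) hE).trans (nearMeasure_nsmul_le hE hk0)
  rw [hvE, volume_ball_eq hN hr.le, volume_ball_eq hN (by positivity), ← hw,
    ← ENNReal.ofReal_sub _ (by positivity), ← ENNReal.ofReal_mul (by positivity),
    ← ENNReal.ofReal_toReal hfin, ← ENNReal.ofReal_natCast, ← ENNReal.ofReal_pow hkR.le,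
    ← ENNReal.ofReal_mul (by positivity), ENNReal.ofReal_le_ofReal_iff (by positivity)] at h
  refine ENNReal.ofReal_le_of_le_toReal ?_
  set n := (nearMeasure E E ρ).toReal with hn
  have hn0 : 0 ≤ n := ENNReal.toReal_nonneg
  have hpow : r ^ (M + 1) ≤ (k * ρ) ^ (M + 1) / 2 := by
    have h1 : r ^ (M + 1) ≤ (k * ρ / 2) ^ (M + 1) := by gcongr; linarith
    have h2 : (1 : ℝ) ≤ 2 ^ M := one_le_pow₀ one_le_two
    rw [div_pow, pow_succ 2 M] at h1
    refine h1.trans ?_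
    gcongr
    linarith
  have h3 : r ^ (M + 1) * w * ((k * ρ) ^ (M + 1) / 2 * w) ≤ (k : ℝ) ^ (M + 1 + 1) * n := by
    refine le_trans ?_ h
    gcongr
    nlinarith
  have h4 : w ^ 2 * r ^ (M + 1) * ρ ^ (M + 1) / 2 ≤ k * n := by
    have : (0 : ℝ) < (k : ℝ) ^ (M + 1) := by positivity
    refine le_of_mul_le_mul_left ?_ this
    calc _ = r ^ (M + 1) * w * ((k * ρ) ^ (M + 1) / 2 * w) := by rw [mul_pow]; ring
      _ ≤ _ := h3
      _ = _ := by ring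
  have h5 : r * (w ^ 2 * r ^ M * ρ ^ (M + 1 + 1) / 6) ≤ r * n := by
    calc r * (w ^ 2 * r ^ M * ρ ^ (M + 1 + 1) / 6)
        = (w ^ 2 * r ^ (M + 1) * ρ ^ (M + 1) / 2) * (ρ / 3) := by ring
      _ ≤ k * n * (ρ / 3) := by gcongr
      _ = (k * ρ) * (n / 3) := by ring
      _ ≤ 3 * r * (n / 3) := by gcongr
      _ = r * n := by ring
  simpa using le_of_mul_le_mul_left h5 hr

/-- Up to a dilation of the distance, passing to balls of the same volume does not increase
`nearMeasure`. -/
lemma nearMeasure_ball_le_nearMeasure (hN : 1 ≤ N) (hE : MeasurableSet E) (hF : MeasurableSet F)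
    (hEF : E ⊆ F) {r R : ℝ} (hr : 0 ≤ r) (hR : 0 ≤ R)
    (hvE : volume E = volume (ball (0 : EuclideanSpace ℝ (Fin N)) r))
    (hvF : volume F = volume (ball (0 : EuclideanSpace ℝ (Fin N)) R)) (hρ : 0 < ρ) :
    nearMeasure (ball (0 : EuclideanSpace ℝ (Fin N)) r) (ball 0 R) ρ ≤
      nearMeasure E F (dilationFactor N * ρ) := by
  rcases hr.eq_or_lt with rfl | hr0
  · simp [nearMeasure]
  rcases le_or_gt (r + ρ) R with hRρ | hRρ
  · rw [nearMeasure_ball_eq_zero hRρ]; exact zero_le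
  obtain ⟨M, rfl⟩ : ∃ M, N = M + 1 := ⟨N - 1, by omega⟩
  have hw0 : 0 < (ballVol (M + 1)).toReal := ballVol_toReal_pos _
  have hrR : r ≤ R := by
    have := measure_mono (μ := volume) hEF
    rw [hvE, hvF, volume_ball_eq hN hr, volume_ball_eq hN hR,
      ENNReal.ofReal_le_ofReal_iff (by positivity)] at this
    exact le_of_pow_le_pow_left₀ (Nat.succ_ne_zero M) hR (le_of_mul_le_mul_right this hw0)
  have hup := nearMeasure_ball_le (N := M + 1) (ρ := ρ) hrR
  set l : ℝ := 6 * (M + 1 : ℕ) * 2 ^ (M + 1) with hl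
  have hl1 : 1 ≤ l := by
    have h1 : (1 : ℝ) ≤ 2 ^ (M + 1) := one_le_pow₀ one_le_two
    have h2 : (0 : ℝ) ≤ M := Nat.cast_nonneg M
    rw [hl]; push_cast; nlinarith
  have hdil : dilationFactor (M + 1) = l + 2 := rfl
  set w := (ballVol (M + 1)).toReal with hw
  rcases le_or_gt (l * ρ) r with hlr | hlr
  · refine le_trans ?_ (nearMeasure_mono_radius (ρ := l * ρ) (by rw [hdil]; nlinarith))
    have hρr : ρ ≤ r := by nlinarith
    have hself := (le_nearMeasure_self hN hE hr0 hvE (by positivity) hlr).trans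
      (nearMeasure_self_le hE hF)
    rw [measure_sdiff hEF hE.nullMeasurableSet (by rw [hvE]; exact measure_ball_lt_top.ne), hvE, hvF,
      volume_ball_eq hN hr, volume_ball_eq hN hR, volume_ball_eq hN (by positivity), ← hw,
      ← ENNReal.ofReal_sub _ (by positivity), ← ENNReal.ofReal_mul (by positivity),
      ← tsub_le_iff_right, ← ENNReal.ofReal_sub _ (by
        have : r ^ (M + 1) ≤ R ^ (M + 1) := by gcongr
        have : 0 ≤ R ^ (M + 1) * w - r ^ (M + 1) * w := by nlinarith
        positivity)] at hself
    refine hup.trans (le_trans ?_ hself)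
    rw [measure_sdiff (ball_subset_ball (by linarith)) measurableSet_ball.nullMeasurableSet
      measure_ball_lt_top.ne, volume_ball_eq hN hr, volume_ball_eq hN (by linarith),
      volume_ball_eq hN hρ.le, ← hw, ← ENNReal.ofReal_sub _ (by
        have : 0 ≤ r - ρ := by linarith
        positivity), ← ENNReal.ofReal_mul' (by positivity)]
    refine ENNReal.ofReal_le_ofReal ?_
    have h1 := pow_sub_pow_le_mul (show 0 ≤ r - ρ by linarith) (show r - ρ ≤ r by linarith) M
    have h2 := pow_sub_pow_le_mul hr hrR M
    have h3 : R ^ M ≤ (2 * r) ^ M := by gcongr; linarith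
    have h4 : R ^ (M + 1) - r ^ (M + 1) ≤ (M + 1) * ρ * (2 * r) ^ M := by
      refine h2.trans ?_
      gcongr
      linarith
    have h5 : ρ ^ (M + 1) ≤ (l * ρ) ^ (M + 1) := by gcongr; nlinarith
    have h6 : (1 : ℝ) ≤ 2 ^ M := one_le_pow₀ one_le_two
    simp only [add_tsub_cancel_right]
    calc (r ^ (M + 1) * w - (r - ρ) ^ (M + 1) * w) * (ρ ^ (M + 1) * w)
        = (r ^ (M + 1) - (r - ρ) ^ (M + 1)) * w * (ρ ^ (M + 1) * w) := by ring
      _ ≤ ((M + 1) * (r - (r - ρ)) * r ^ M) * w * (ρ ^ (M + 1) * w) := by gcongr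
      _ ≤ ((M + 1) * (r - (r - ρ)) * r ^ M) * w * ((l * ρ) ^ (M + 1) * w) := by
        have : 0 ≤ r - (r - ρ) := by linarith
        gcongr
      _ = 1 * (((M + 1) * ρ * r ^ M) * w * ((l * ρ) ^ (M + 1) * w)) := by ring
      _ ≤ 2 ^ M * (((M + 1) * ρ * r ^ M) * w * ((l * ρ) ^ (M + 1) * w)) := by gcongr
      _ = w ^ 2 * r ^ M * (l * ρ) ^ (M + 1 + 1) / 6
          - (l * ρ) ^ (M + 1) * w * ((M + 1) * ρ * (2 * r) ^ M * w) := by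
        rw [pow_succ (l * ρ) (M + 1), mul_pow 2 r]
        generalize (l * ρ) ^ (M + 1) = q
        rw [hl]; push_cast; ring
      _ ≤ w ^ 2 * r ^ M * (l * ρ) ^ (M + 1 + 1) / 6
          - (l * ρ) ^ (M + 1) * w * ((R ^ (M + 1) - r ^ (M + 1)) * w) := by
        gcongr
      _ = _ := by ring
  · have hlow := le_nearMeasure (E := E) (F := F) (ρ := dilationFactor (M + 1) * ρ) hE
    have hΛ : 0 ≤ dilationFactor (M + 1) * ρ := by rw [hdil]; positivity
    rw [hvE, hvF, volume_ball_eq hN hr, volume_ball_eq hN hR, volume_ball_eq hN hΛ, ← hw,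
      ← ENNReal.ofReal_sub _ (by positivity), ← ENNReal.ofReal_mul (by positivity)] at hlow
    refine hup.trans (le_trans ?_ hlow)
    refine (mul_le_mul_left (measure_mono sdiff_subset) _).trans ?_
    rw [volume_ball_eq hN hr, volume_ball_eq hN hρ.le, ← hw, ← ENNReal.ofReal_mul (by positivity)]
    refine ENNReal.ofReal_le_ofReal ?_
    gcongr
    rw [← sub_mul]
    gcongr
    have h1 : R ^ (M + 1) ≤ ((l + 1) * ρ) ^ (M + 1) := by gcongr; linarith
    have h2 := pow_add_pow_le (show 0 ≤ (l + 1) * ρ by positivity) hρ.le (Nat.succ_ne_zero M)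
    have h3 : (l + 1) * ρ + ρ = dilationFactor (M + 1) * ρ := by rw [hdil]; ring
    rw [h3] at h2
    simp only [Nat.succ_eq_add_one] at h2
    linarith

end NearMeasure

section Rearrangement

variable {N : ℕ} {u : EuclideanSpace ℝ (Fin N) → ℝ}

lemma bddAbove_rearrangeFun_set {B : ℝ} (hB : ∀ x, u x ≤ B) (x : EuclideanSpace ℝ (Fin N)) :
    BddAbove {t : ℝ | 0 < t ∧
      ballVol N * ENNReal.ofReal (‖x‖ ^ N) < volume {y | t < u y}} := by
  refine ⟨B, fun t ht => ?_⟩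
  obtain ⟨y, hy⟩ := nonempty_of_measure_ne_zero (ht.2.trans_le' zero_le).ne'
  exact (hy.trans_le (hB y)).le

lemma rearrangeFun_nonneg (x : EuclideanSpace ℝ (Fin N)) : 0 ≤ rearrangeFun u x :=
  Real.sSup_nonneg fun _ ht => ht.1.le

/-- The superlevel sets of `u*` are determined by the volumes of those of `u`. -/
lemma lt_rearrangeFun_iff {B : ℝ} (hB : ∀ x, u x ≤ B) {t : ℝ} (ht : 0 ≤ t)
    (x : EuclideanSpace ℝ (Fin N)) :
    t < rearrangeFun u x ↔ ballVol N * ENNReal.ofReal (‖x‖ ^ N) < volume {y | t < u y} := by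
  have hbdd := bddAbove_rearrangeFun_set hB x
  constructor
  · intro h
    obtain ⟨τ, hτ, htτ⟩ : ∃ τ ∈ {t : ℝ | 0 < t ∧
        ballVol N * ENNReal.ofReal (‖x‖ ^ N) < volume {y | t < u y}}, t < τ := by
      refine (lt_csSup_iff hbdd ?_).1 h
      rw [nonempty_iff_ne_empty]
      intro hempty
      rw [rearrangeFun, hempty, Real.sSup_empty] at h
      exact absurd h ht.not_gt
    exact hτ.2.trans_le (measure_mono fun y hy => htτ.trans hy)
  · intro h
    have hU : {y | t < u y} = ⋃ n : ℕ, {y | t + 1 / ((n : ℝ) + 1) < u y} := by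
      ext y
      simp only [mem_ofPred_eq, mem_iUnion]
      constructor
      · intro hy
        obtain ⟨n, hn⟩ := exists_nat_one_div_lt (sub_pos.2 hy)
        exact ⟨n, by linarith⟩
      · rintro ⟨n, hn⟩
        have : (0 : ℝ) < 1 / ((n : ℝ) + 1) := by positivity
        linarith
    have hmono : Monotone fun n : ℕ => {y | t + 1 / ((n : ℝ) + 1) < u y} := by
      intro n m hnm y hy
      have : 1 / ((m : ℝ) + 1) ≤ 1 / ((n : ℝ) + 1) := by gcongr
      exact lt_of_le_of_lt (add_le_add_right this t) hy
    rw [hU, hmono.measure_iUnion, lt_iSup_iff] at h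
    obtain ⟨n, hn⟩ := h
    have hpos : (0 : ℝ) < 1 / ((n : ℝ) + 1) := by positivity
    have := le_csSup hbdd (show t + 1 / ((n : ℝ) + 1) ∈ _ from ⟨by positivity, hn⟩)
    exact lt_of_lt_of_le (by linarith) this

lemma exists_ball_of_volume (hN : 1 ≤ N) {v : ℝ≥0∞} (hv : v ≠ ⊤) :
    ∃ r : ℝ, 0 ≤ r ∧ volume (ball (0 : EuclideanSpace ℝ (Fin N)) r) = v ∧
      {x : EuclideanSpace ℝ (Fin N) | ballVol N * ENNReal.ofReal (‖x‖ ^ N) < v} = ball 0 r := by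
  have hw0 := ballVol_toReal_pos N
  have hN0 : N ≠ 0 := by omega
  set r : ℝ := (v.toReal / (ballVol N).toReal) ^ ((N : ℝ)⁻¹)
  have hr : 0 ≤ r := by positivity
  have hrN : r ^ N * (ballVol N).toReal = v.toReal := by
    rw [Real.rpow_inv_natCast_pow (by positivity) hN0]
    field_simp
  have hvol : volume (ball (0 : EuclideanSpace ℝ (Fin N)) r) = v := by
    rw [volume_ball_eq hN hr, hrN, ENNReal.ofReal_toReal hv]
  refine ⟨r, hr, hvol, ?_⟩
  ext x
  have hx : ballVol N * ENNReal.ofReal (‖x‖ ^ N) =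
      ENNReal.ofReal (‖x‖ ^ N * (ballVol N).toReal) := by
    rw [ENNReal.ofReal_mul (by positivity),
      ENNReal.ofReal_toReal (show ballVol N ≠ ⊤ from measure_ball_lt_top.ne), mul_comm]
  rw [mem_ofPred_eq, hx, ← hvol, volume_ball_eq hN hr,
    ENNReal.ofReal_lt_ofReal_iff_of_nonneg (by positivity), mem_ball_zero_iff,
    mul_lt_mul_iff_left₀ hw0, pow_lt_pow_iff_left₀ (norm_nonneg x) hr hN0]

lemma exists_superlevel_rearrangeFun (hN : 1 ≤ N) {B : ℝ} (hB : ∀ x, u x ≤ B)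
    (hfin : volume {y | 0 < u y} ≠ ⊤) {t : ℝ} (ht : 0 ≤ t) :
    ∃ r : ℝ, 0 ≤ r ∧ volume {x | t < u x} = volume (ball (0 : EuclideanSpace ℝ (Fin N)) r) ∧
      {x | t < rearrangeFun u x} = ball 0 r := by
  obtain ⟨r, hr, hvol, hball⟩ := exists_ball_of_volume (N := N) hN
    (v := volume {x | t < u x}) (measure_ne_top_of_subset (fun x hx => ht.trans_lt hx) hfin)
  refine ⟨r, hr, hvol.symm, ?_⟩
  rw [← hball]
  ext x
  exact lt_rearrangeFun_iff hB ht x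

lemma measurable_rearrangeFun (hN : 1 ≤ N) {B : ℝ} (hB : ∀ x, u x ≤ B)
    (hfin : volume {y | 0 < u y} ≠ ⊤) : Measurable (rearrangeFun u) := by
  refine measurable_of_Ioi fun t => ?_
  rcases le_or_gt 0 t with ht | ht
  · obtain ⟨r, -, -, h⟩ := exists_superlevel_rearrangeFun hN hB hfin ht
    change MeasurableSet {x | t < rearrangeFun u x}
    rw [h]
    exact measurableSet_ball
  · convert MeasurableSet.univ
    exact eq_univ_of_forall fun x => ht.trans_le (rearrangeFun_nonneg x)

/-- The integral of `(u x - u y - σ)⁺` over pairs at distance less than `ρ`. -/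
noncomputable def excess (u : EuclideanSpace ℝ (Fin N) → ℝ) (ρ σ : ℝ) : ℝ≥0∞ :=
  ∫⁻ x, ∫⁻ y, if dist x y < ρ then ENNReal.ofReal (u x - u y - σ) else 0

lemma excess_eq_lintegral_nearMeasure (hu : Measurable u) (h0 : ∀ x, 0 ≤ u x) (ρ σ : ℝ) :
    excess u ρ σ =
      ∫⁻ t in Ici (0 : ℝ), nearMeasure {x | t + σ < u x} {x | t < u x} ρ := by
  set T : Set ((EuclideanSpace ℝ (Fin N) × EuclideanSpace ℝ (Fin N)) × ℝ) :=
    {q | q.2 + σ < u q.1.1 ∧ u q.1.2 ≤ q.2 ∧ dist q.1.1 q.1.2 < ρ} with hT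
  have hTm : MeasurableSet T := by
    have h1 : Measurable fun q : (EuclideanSpace ℝ (Fin N) × EuclideanSpace ℝ (Fin N)) × ℝ =>
        u q.1.1 := hu.comp (measurable_fst.comp measurable_fst)
    have h2 : Measurable fun q : (EuclideanSpace ℝ (Fin N) × EuclideanSpace ℝ (Fin N)) × ℝ =>
        u q.1.2 := hu.comp (measurable_snd.comp measurable_fst)
    exact (measurableSet_lt (measurable_snd.add_const σ) h1).inter
      ((measurableSet_le h2 measurable_snd).inter
        (measurableSet_lt (measurable_dist.comp measurable_fst) measurable_const))
  set P : Measure (EuclideanSpace ℝ (Fin N) × EuclideanSpace ℝ (Fin N)) := volume.prod volume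
  have h1 := Measure.prod_apply (μ := P) (ν := volume.restrict (Ici (0 : ℝ))) hTm
  have h2 := Measure.prod_apply_symm (μ := P) (ν := volume.restrict (Ici (0 : ℝ))) hTm
  have h3 : ∀ t : ℝ, P ((fun p => (p, t)) ⁻¹' T) =
      nearMeasure {x | t + σ < u x} {x | t < u x} ρ := by
    intro t
    rw [Measure.prod_apply (measurable_prodMk_right hTm), nearMeasure]
    refine lintegral_congr fun x => congrArg _ ?_
    ext y
    simp [hT]
  have h4 : ∀ p : EuclideanSpace ℝ (Fin N) × EuclideanSpace ℝ (Fin N),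
      (volume.restrict (Ici (0 : ℝ))) (Prod.mk p ⁻¹' T) =
        if dist p.1 p.2 < ρ then ENNReal.ofReal (u p.1 - u p.2 - σ) else 0 := by
    intro p
    rw [Measure.restrict_apply (measurable_prodMk_left hTm)]
    split_ifs with hp
    · have : Prod.mk p ⁻¹' T ∩ Ici 0 = Ico (u p.2) (u p.1 - σ) := by
        ext t
        simp only [hT, mem_inter_iff, mem_preimage, mem_ofPred_eq, mem_Ici, mem_Ico, hp, and_true]
        constructor
        · rintro ⟨⟨h1, h2⟩, h3⟩
          exact ⟨h2, by linarith⟩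
        · rintro ⟨h1, h2⟩
          exact ⟨⟨by linarith, h1⟩, (h0 p.2).trans h1⟩
      rw [this, Real.volume_Ico]
      congr 1
      ring
    · have : Prod.mk p ⁻¹' T ∩ Ici 0 = ∅ := by
        ext t
        simp [hT, hp]
      rw [this, measure_empty]
  have h5 := lintegral_prod (μ := (volume : Measure (EuclideanSpace ℝ (Fin N))))
    (ν := (volume : Measure (EuclideanSpace ℝ (Fin N)))) _
    (measurable_measure_prodMk_left (ν := volume.restrict (Ici (0 : ℝ))) hTm).aemeasurable
  rw [h1, h5] at h2
  simp only [h3, h4] at h2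
  exact h2

lemma excess_rearrangeFun_le (hN : 1 ≤ N) (hu : Measurable u) (h0 : ∀ x, 0 ≤ u x) {B : ℝ}
    (hB : ∀ x, u x ≤ B) (hfin : volume {y | 0 < u y} ≠ ⊤) {ρ σ : ℝ} (hρ : 0 < ρ) (hσ : 0 ≤ σ) :
    excess (rearrangeFun u) ρ σ ≤ excess u (dilationFactor N * ρ) σ := by
  rw [excess_eq_lintegral_nearMeasure (measurable_rearrangeFun hN hB hfin) rearrangeFun_nonneg,
    excess_eq_lintegral_nearMeasure hu h0]
  refine setLIntegral_mono' measurableSet_Ici fun t ht => ?_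
  have ht0 : 0 ≤ t := ht
  obtain ⟨R, hR, hvR, hsR⟩ := exists_superlevel_rearrangeFun hN hB hfin ht0
  obtain ⟨r, hr, hvr, hsr⟩ := exists_superlevel_rearrangeFun hN hB hfin (add_nonneg ht0 hσ)
  rw [hsR, hsr]
  refine nearMeasure_ball_le_nearMeasure hN (measurableSet_lt measurable_const hu)
    (measurableSet_lt measurable_const hu) (fun x hx => ?_) hr hR hvr hvR hρ
  exact lt_of_le_of_lt (le_add_of_nonneg_right hσ) hx

end Rearrangement

section DyadicKernel

lemma exists_tsum_zpow_le {q : ℝ} (hq : 0 < q) :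
    ∃ C : ℝ≥0∞, C ≠ ⊤ ∧ ∀ b : ℝ, 0 < b →
      ∑' j : ℤ, ENNReal.ofReal (if (2 : ℝ) ^ j < b then ((2 : ℝ) ^ j / b) ^ q else 0) ≤ C := by
  set ν : ℝ≥0∞ := ENNReal.ofReal ((2 : ℝ) ^ (-q)) with hν
  have hν1 : ν < 1 := by
    rw [hν, ENNReal.ofReal_lt_one]
    exact Real.rpow_lt_one_of_one_lt_of_neg one_lt_two (neg_lt_zero.2 hq)
  refine ⟨(1 - ν)⁻¹, ENNReal.inv_ne_top.2 (tsub_pos_of_lt hν1).ne', fun b hb => ?_⟩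
  obtain ⟨m, hm1, hm2⟩ := exists_mem_Ioc_zpow hb (one_lt_two : (1 : ℝ) < 2)
  have hinj : Function.Injective fun n : ℕ => m - (n : ℤ) := fun a b hab => by
    simp only at hab; omega
  rw [← hinj.tsum_eq, ← ENNReal.tsum_geometric]
  · refine ENNReal.tsum_le_tsum fun n => ?_
    have h2 : ((2 : ℝ) ^ (m - (n : ℤ)) / b) ^ q ≤ ((2 : ℝ) ^ (-q)) ^ n := by
      have h3 : (2 : ℝ) ^ (m - (n : ℤ)) / b ≤ (2 : ℝ) ^ (-(n : ℝ)) := by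
        rw [div_le_iff₀ hb, Real.rpow_neg two_pos.le, Real.rpow_natCast, zpow_sub₀ two_ne_zero,
          zpow_natCast, div_eq_inv_mul]
        gcongr
      calc ((2 : ℝ) ^ (m - (n : ℤ)) / b) ^ q ≤ ((2 : ℝ) ^ (-(n : ℝ))) ^ q := by gcongr
        _ = ((2 : ℝ) ^ (-q)) ^ n := by
          rw [← Real.rpow_mul two_pos.le, ← Real.rpow_natCast, ← Real.rpow_mul two_pos.le]
          congr 1; ring
    rw [hν, ← ENNReal.ofReal_pow (by positivity)]
    refine ENNReal.ofReal_le_ofReal ?_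
    split_ifs
    · exact h2
    · positivity
  · intro j hj
    have hjb : (2 : ℝ) ^ j < b := by
      by_contra hcon
      simp [hcon] at hj
    have : j < m + 1 := (zpow_lt_zpow_iff_right₀ one_lt_two).1 (hjb.trans_le hm2)
    exact ⟨(m - j).toNat, by simp only; omega⟩

/-- The dyadic weights in the decomposition of the kernel `G (a / r ^ s) / r ^ N`. -/
noncomputable def dyadicWeight (N : ℕ) (s : ℝ) (G : ℝ → ℝ) (k j : ℤ) : ℝ≥0∞ :=
  ENNReal.ofReal (G ((2 : ℝ) ^ j / ((2 : ℝ) ^ k) ^ s) / (((2 : ℝ) ^ k) ^ N * (2 : ℝ) ^ j))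

variable {N : ℕ} {s : ℝ} {G g : ℝ → ℝ} {pm pp : ℝ}

/-- A dyadic superposition of the kernels `1_{r < l ρ} (a - σ)⁺`. -/
noncomputable def dyadicKernel (N : ℕ) (s : ℝ) (G : ℝ → ℝ) (l a r : ℝ) : ℝ≥0∞ :=
  ∑' k : ℤ, ∑' j : ℤ, dyadicWeight N s G k j *
    if r < l * (2 : ℝ) ^ k then ENNReal.ofReal (a - (2 : ℝ) ^ j) else 0

lemma exists_kernel_le_dyadicKernel (N : ℕ) (hs : s ∈ Ioo (0 : ℝ) 1) (hY : IsYoungPair G g)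
    (hG : GrowthCond G g pm pp) :
    ∃ C : ℝ≥0∞, C ≠ ⊤ ∧ ∀ a r : ℝ, 0 ≤ a → 0 ≤ r → (r = 0 → a = 0) →
      ENNReal.ofReal (G (a / r ^ s) / r ^ (N : ℝ)) ≤ C * dyadicKernel N s G 1 a r := by
  refine ⟨ENNReal.ofReal ((8 : ℝ) ^ pp * 2 ^ N), ENNReal.ofReal_ne_top, fun a r ha hr hra => ?_⟩
  rcases ha.eq_or_lt with rfl | ha
  · simp [hY.map_zero]
  have hr : 0 < r := hr.lt_of_ne fun h => ha.ne' (hra h.symm)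
  obtain ⟨n, hn1, hn2⟩ := exists_mem_Ico_zpow hr (one_lt_two : (1 : ℝ) < 2)
  obtain ⟨j, hj1, hj2⟩ := exists_mem_Ico_zpow (half_pos ha) (one_lt_two : (1 : ℝ) < 2)
  have hterm : dyadicWeight N s G (n + 1) j *
      (if r < 1 * (2 : ℝ) ^ (n + 1) then ENNReal.ofReal (a - (2 : ℝ) ^ j) else 0) ≤
        dyadicKernel N s G 1 a r :=
    (ENNReal.le_tsum j).trans (ENNReal.le_tsum (f := fun k => ∑' j : ℤ, dyadicWeight N s G k j *
      if r < 1 * (2 : ℝ) ^ k then ENNReal.ofReal (a - (2 : ℝ) ^ j) else 0) (n + 1))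
  refine le_trans ?_ (mul_le_mul_right hterm _)
  rw [one_mul, if_pos hn2, dyadicWeight]
  rw [zpow_add_one₀ two_ne_zero] at hj2
  have hcr : (2 : ℝ) ^ (n + 1) ≤ 2 * r := by
    rw [zpow_add_one₀ two_ne_zero]; linarith
  have hc : (0 : ℝ) < (2 : ℝ) ^ (n + 1) := by positivity
  have hb : (0 : ℝ) < (2 : ℝ) ^ j := by positivity
  set b : ℝ := (2 : ℝ) ^ j
  set c : ℝ := (2 : ℝ) ^ (n + 1)
  have hcs : 0 < c ^ s := Real.rpow_pos_of_pos hc s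
  have hG0 : 0 ≤ G (b / c ^ s) := hY.nonneg (by positivity)
  have hab : 0 ≤ a - b := by linarith
  rw [← ENNReal.ofReal_mul (by positivity), ← ENNReal.ofReal_mul (by positivity)]
  refine ENNReal.ofReal_le_ofReal ?_
  have hrs : c ^ s ≤ 2 * r ^ s := by
    calc c ^ s ≤ (2 * r) ^ s := Real.rpow_le_rpow hc.le hcr hs.1.le
      _ = 2 ^ s * r ^ s := Real.mul_rpow two_pos.le hr.le
      _ ≤ 2 * r ^ s := by
        gcongr
        simpa using Real.rpow_le_rpow_of_exponent_le one_le_two hs.2.le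
  have hrs0 : 0 < r ^ s := Real.rpow_pos_of_pos hr s
  have harg : a / r ^ s ≤ 8 * (b / c ^ s) := by
    rw [mul_div_assoc', div_le_div_iff₀ hrs0 hcs]
    nlinarith
  have hGle : G (a / r ^ s) ≤ 8 ^ pp * G (b / c ^ s) :=
    (hY.monotoneOn (mem_Ici.2 (by positivity)) (mem_Ici.2 (by positivity)) harg).trans
      (hY.map_mul_le_of_one_le hG (by norm_num) (by positivity))
  rw [Real.rpow_natCast]
  calc G (a / r ^ s) / r ^ N ≤ 8 ^ pp * G (b / c ^ s) / r ^ N := by gcongr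
    _ = 8 ^ pp * 2 ^ N * (G (b / c ^ s) / (2 * r) ^ N) := by
      rw [mul_pow]; field_simp
    _ ≤ 8 ^ pp * 2 ^ N * (G (b / c ^ s) / c ^ N) := by gcongr
    _ = 8 ^ pp * 2 ^ N * (G (b / c ^ s) / (c ^ N * b) * b) := by field_simp
    _ ≤ 8 ^ pp * 2 ^ N * (G (b / c ^ s) / (c ^ N * b) * (a - b)) := by
      gcongr
      linarith

lemma dyadic_term_le (hs : s ∈ Ioo (0 : ℝ) 1) (hY : IsYoungPair G g)
    (hG : GrowthCond G g pm pp) {l a r b c : ℝ} (hl : 1 ≤ l) (hr : 0 < r) (hb : 0 < b)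
    (hc : 0 < c) (hba : b < a) (hrc : r < l * c) :
    G (b / c ^ s) / (c ^ N * b) * (a - b) ≤
      (l ^ s) ^ pp * l ^ N * (G (a / r ^ s) / r ^ (N : ℝ)) * (b / a) ^ (pm - 1) *
        (c⁻¹ / (l / r)) ^ (N : ℝ) := by
  have ha : 0 < a := hb.trans hba
  have hl0 : 0 < l := by linarith
  have hcs : 0 < c ^ s := Real.rpow_pos_of_pos hc s
  have hrs : 0 < r ^ s := Real.rpow_pos_of_pos hr s
  have hls : 1 ≤ l ^ s := Real.one_le_rpow hl hs.1.le
  have h1 : G (b / c ^ s) ≤ (b / a) ^ pm * G (a / c ^ s) := by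
    have := hY.map_mul_le hG (l := b / a) (t := a / c ^ s) (by positivity)
      ((div_le_one ha).2 hba.le) (by positivity)
    rwa [div_mul_div_cancel₀ ha.ne'] at this
  have harg : a / c ^ s ≤ l ^ s * (a / r ^ s) := by
    rw [mul_div_assoc', div_le_div_iff₀ hcs hrs]
    have : r ^ s ≤ l ^ s * c ^ s := by
      rw [← Real.mul_rpow hl0.le hc.le]
      exact Real.rpow_le_rpow hr.le hrc.le hs.1.le
    nlinarith
  have h2 : G (a / c ^ s) ≤ (l ^ s) ^ pp * G (a / r ^ s) :=
    (hY.monotoneOn (mem_Ici.2 (by positivity)) (mem_Ici.2 (by positivity)) harg).trans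
      (hY.map_mul_le_of_one_le hG hls (by positivity))
  have hG0 : 0 ≤ G (b / c ^ s) := hY.nonneg (by positivity)
  rw [Real.rpow_natCast, Real.rpow_natCast]
  have hpm : (b / a) ^ pm = (b / a) ^ (pm - 1) * (b / a) := by
    rw [← Real.rpow_add_one (by positivity)]; congr 1; ring
  calc G (b / c ^ s) / (c ^ N * b) * (a - b)
      ≤ (b / a) ^ pm * ((l ^ s) ^ pp * G (a / r ^ s)) / (c ^ N * b) * a := by
        have hG1 : 0 ≤ G (a / r ^ s) := hY.nonneg (by positivity)
        have h3 : G (b / c ^ s) ≤ (b / a) ^ pm * ((l ^ s) ^ pp * G (a / r ^ s)) :=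
          h1.trans (by gcongr)
        have h4 : a - b ≤ a := by linarith
        gcongr
    _ = _ := by
        rw [hpm, div_pow, div_pow, inv_pow]
        field_simp

lemma exists_dyadicKernel_le_kernel (hN : 1 ≤ N) (hs : s ∈ Ioo (0 : ℝ) 1) (hY : IsYoungPair G g)
    (hG : GrowthCond G g pm pp) {l : ℝ} (hl : 1 ≤ l) :
    ∃ C : ℝ≥0∞, C ≠ ⊤ ∧ ∀ a r : ℝ, 0 ≤ a → 0 ≤ r → (r = 0 → a = 0) →
      dyadicKernel N s G l a r ≤ C * ENNReal.ofReal (G (a / r ^ s) / r ^ (N : ℝ)) := by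
  obtain ⟨C₁, hC₁, h₁⟩ := exists_tsum_zpow_le (q := pm - 1) (by linarith [hG.1])
  obtain ⟨C₂, hC₂, h₂⟩ := exists_tsum_zpow_le (q := (N : ℝ)) (by exact_mod_cast hN)
  have hl0 : 0 < l := by linarith
  set K : ℝ := (l ^ s) ^ pp * l ^ N with hK
  have hK0 : 0 ≤ K := by positivity
  refine ⟨ENNReal.ofReal K * C₁ * C₂, by finiteness, fun a r ha hr hra => ?_⟩
  rcases ha.eq_or_lt with rfl | ha
  · have : ∀ j : ℤ, ENNReal.ofReal (0 - (2 : ℝ) ^ j) = 0 := fun j =>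
      ENNReal.ofReal_of_nonpos (by simp only [zero_sub, neg_nonpos]; positivity)
    have hzero : dyadicKernel N s G l 0 r = 0 := by
      simp only [dyadicKernel, this, ite_self, mul_zero, tsum_zero]
    rw [hzero]
    exact zero_le
  have hr : 0 < r := hr.lt_of_ne fun h => ha.ne' (hra h.symm)
  set Φ := G (a / r ^ s) / r ^ (N : ℝ) with hΦ
  have hrs : 0 < r ^ s := Real.rpow_pos_of_pos hr s
  have hΦ0 : 0 ≤ Φ := div_nonneg (hY.nonneg (by positivity)) (by positivity)
  set f : ℤ → ℝ := fun j => if (2 : ℝ) ^ j < a then ((2 : ℝ) ^ j / a) ^ (pm - 1) else 0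
  set e : ℤ → ℝ := fun j => if (2 : ℝ) ^ j < l / r then ((2 : ℝ) ^ j / (l / r)) ^ (N : ℝ) else 0
  have hterm : ∀ k j : ℤ, (dyadicWeight N s G k j *
      if r < l * (2 : ℝ) ^ k then ENNReal.ofReal (a - (2 : ℝ) ^ j) else 0) ≤
        ENNReal.ofReal (K * Φ) * ENNReal.ofReal (e (-k)) * ENNReal.ofReal (f j) := by
    intro k j
    have hc : (0 : ℝ) < (2 : ℝ) ^ k := by positivity
    have hb : (0 : ℝ) < (2 : ℝ) ^ j := by positivity
    have hcs : 0 < ((2 : ℝ) ^ k) ^ s := Real.rpow_pos_of_pos hc s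
    split_ifs with hrc
    · rcases le_or_gt a ((2 : ℝ) ^ j) with hba | hba
      · rw [ENNReal.ofReal_of_nonpos (sub_nonpos.2 hba), mul_zero]
        exact zero_le
      · have hck : (2 : ℝ) ^ (-k) < l / r := by
          rw [zpow_neg, lt_div_iff₀ hr, inv_mul_lt_iff₀ hc, mul_comm]
          exact hrc
        simp only [e, f, if_pos hck, if_pos hba, dyadicWeight]
        have hG0 : 0 ≤ G ((2 : ℝ) ^ j / ((2 : ℝ) ^ k) ^ s) := hY.nonneg (by positivity)
        rw [← ENNReal.ofReal_mul (by positivity), ← ENNReal.ofReal_mul (by positivity),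
          ← ENNReal.ofReal_mul (by positivity)]
        refine ENNReal.ofReal_le_ofReal ?_
        refine (dyadic_term_le hs hY hG hl hr hb hc hba hrc).trans_eq ?_
        rw [zpow_neg]
        ring
    · rw [mul_zero]
      exact zero_le
  calc dyadicKernel N s G l a r
      ≤ ∑' k : ℤ, ∑' j : ℤ,
        ENNReal.ofReal (K * Φ) * ENNReal.ofReal (e (-k)) * ENNReal.ofReal (f j) :=
        ENNReal.tsum_le_tsum fun k => ENNReal.tsum_le_tsum fun j => hterm k j
    _ = ENNReal.ofReal (K * Φ) * (∑' k : ℤ, ENNReal.ofReal (e (-k))) *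
        ∑' j : ℤ, ENNReal.ofReal (f j) := by
        simp_rw [ENNReal.tsum_mul_left, ENNReal.tsum_mul_right, ENNReal.tsum_mul_left]
    _ ≤ ENNReal.ofReal (K * Φ) * C₂ * C₁ := by
        have hneg : ∑' k : ℤ, ENNReal.ofReal (e (-k)) = ∑' k : ℤ, ENNReal.ofReal (e k) :=
          (Equiv.neg ℤ).tsum_eq fun k => ENNReal.ofReal (e k)
        rw [hneg]
        gcongr
        · exact h₂ _ (by positivity)
        · exact h₁ _ ha
    _ = _ := by rw [ENNReal.ofReal_mul hK0]; ring

end DyadicKernel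

section Comparison

variable {N : ℕ} {s : ℝ} {G g : ℝ → ℝ} {pm pp : ℝ} {u : EuclideanSpace ℝ (Fin N) → ℝ}

lemma measurable_ite_dist (hu : Measurable u) (ρ σ : ℝ) :
    Measurable fun p : EuclideanSpace ℝ (Fin N) × EuclideanSpace ℝ (Fin N) =>
      if dist p.1 p.2 < ρ then ENNReal.ofReal (u p.1 - u p.2 - σ) else 0 :=
  Measurable.ite (measurableSet_lt measurable_dist measurable_const)
    (((hu.comp measurable_fst).sub (hu.comp measurable_snd)).sub_const σ).ennreal_ofReal
    measurable_const

lemma ofReal_abs_sub_sub {σ : ℝ} (hσ : 0 ≤ σ) (a b : ℝ) :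
    ENNReal.ofReal (|a - b| - σ) = ENNReal.ofReal (a - b - σ) + ENNReal.ofReal (b - a - σ) := by
  rcases le_total a b with h | h
  · rw [abs_of_nonpos (sub_nonpos.2 h), ENNReal.ofReal_of_nonpos (by linarith : a - b - σ ≤ 0),
      zero_add, neg_sub]
  · rw [abs_of_nonneg (sub_nonneg.2 h), ENNReal.ofReal_of_nonpos (by linarith : b - a - σ ≤ 0),
      add_zero]

lemma lintegral_abs_sub_eq (hu : Measurable u) (ρ : ℝ) {σ : ℝ} (hσ : 0 ≤ σ) :
    ∫⁻ p : EuclideanSpace ℝ (Fin N) × EuclideanSpace ℝ (Fin N),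
      (if dist p.1 p.2 < ρ then ENNReal.ofReal (|u p.1 - u p.2| - σ) else 0)
        ∂(volume.prod volume) = 2 * excess u ρ σ := by
  have hm := measurable_ite_dist hu ρ σ
  have h1 : ∫⁻ p : EuclideanSpace ℝ (Fin N) × EuclideanSpace ℝ (Fin N),
      (if dist p.1 p.2 < ρ then ENNReal.ofReal (u p.1 - u p.2 - σ) else 0)
        ∂(volume.prod volume) = excess u ρ σ := lintegral_prod _ hm.aemeasurable
  have h2 := lintegral_prod_swap (μ := (volume : Measure (EuclideanSpace ℝ (Fin N))))
    (ν := (volume : Measure (EuclideanSpace ℝ (Fin N))))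
    (fun p : EuclideanSpace ℝ (Fin N) × EuclideanSpace ℝ (Fin N) =>
      if dist p.1 p.2 < ρ then ENNReal.ofReal (u p.1 - u p.2 - σ) else 0)
  rw [h1] at h2
  rw [two_mul]
  nth_rewrite 1 [← h1]
  rw [← h2, ← lintegral_add_left hm]
  refine lintegral_congr fun p => ?_
  simp only [Prod.fst_swap, Prod.snd_swap, dist_comm p.2 p.1]
  split_ifs
  · exact ofReal_abs_sub_sub hσ _ _
  · simp

lemma lintegral_dyadicKernel (hu : Measurable u) (l : ℝ) :
    ∫⁻ x, ∫⁻ y, dyadicKernel N s G l |u x - u y| (dist x y) =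
      ∑' k : ℤ, ∑' j : ℤ, dyadicWeight N s G k j * (2 * excess u (l * 2 ^ k) (2 ^ j)) := by
  have hm : ∀ k j : ℤ, Measurable fun p : EuclideanSpace ℝ (Fin N) × EuclideanSpace ℝ (Fin N) =>
      if dist p.1 p.2 < l * (2 : ℝ) ^ k then ENNReal.ofReal (|u p.1 - u p.2| - (2 : ℝ) ^ j)
        else 0 := fun k j =>
    Measurable.ite (measurableSet_lt measurable_dist measurable_const)
      (((hu.comp measurable_fst).sub (hu.comp measurable_snd)).abs.sub_const _).ennreal_ofReal
      measurable_const
  have hm1 := fun k j => (hm k j).const_mul (dyadicWeight N s G k j)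
  have hm2 := fun k => Measurable.tsum (L := .unconditional ℤ) (hm1 k)
  have hprod := lintegral_prod (μ := (volume : Measure (EuclideanSpace ℝ (Fin N))))
    (ν := (volume : Measure (EuclideanSpace ℝ (Fin N)))) _
    (Measurable.tsum (L := .unconditional ℤ) hm2).aemeasurable
  refine hprod.symm.trans ?_
  rw [lintegral_tsum fun k => (hm2 k).aemeasurable]
  refine tsum_congr fun k => ?_
  rw [lintegral_tsum fun j => (hm1 k j).aemeasurable]
  refine tsum_congr fun j => ?_
  rw [lintegral_const_mul _ (hm k j), lintegral_abs_sub_eq hu _ (by positivity)]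

lemma one_le_dilationFactor (N : ℕ) : 1 ≤ dilationFactor N := by
  have : (0 : ℝ) ≤ 6 * N * 2 ^ N := by positivity
  rw [dilationFactor]; linarith

/-- Rearranging increases the seminorm over the whole space by at most a constant factor. -/
lemma exists_fracSeminorm_rearrangeFun_le (hN : 1 ≤ N) (hs : s ∈ Ioo (0 : ℝ) 1)
    (hY : IsYoungPair G g) (hG : GrowthCond G g pm pp) :
    ∃ C : ℝ≥0∞, C ≠ ⊤ ∧ ∀ u : EuclideanSpace ℝ (Fin N) → ℝ, Measurable u → (∀ x, 0 ≤ u x) →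
      (∃ B, ∀ x, u x ≤ B) → volume {y | 0 < u y} ≠ ⊤ →
      fracSeminorm s G (rearrangeFun u) univ univ ≤ C * fracSeminorm s G u univ univ := by
  obtain ⟨C₁, hC₁, h₁⟩ := exists_kernel_le_dyadicKernel N hs hY hG
  obtain ⟨C₂, hC₂, h₂⟩ := exists_dyadicKernel_le_kernel hN hs hY hG (one_le_dilationFactor N)
  refine ⟨C₁ * C₂, by finiteness, fun u hu h0 ⟨B, hB⟩ hfin => ?_⟩
  have hdist : ∀ (v : EuclideanSpace ℝ (Fin N) → ℝ) (x y : EuclideanSpace ℝ (Fin N)),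
      dist x y = 0 → |v x - v y| = 0 := by
    intro v x y h
    rw [dist_eq_zero.1 h, sub_self, abs_zero]
  simp only [fracSeminorm, Measure.restrict_univ]
  calc ∫⁻ x, ∫⁻ y, ENNReal.ofReal (G (|rearrangeFun u x - rearrangeFun u y| / dist x y ^ s) /
          dist x y ^ (N : ℝ))
      ≤ ∫⁻ x, ∫⁻ y, C₁ *
          dyadicKernel N s G 1 |rearrangeFun u x - rearrangeFun u y| (dist x y) :=
        lintegral_mono fun x => lintegral_mono fun y =>
          h₁ _ _ (abs_nonneg _) dist_nonneg (hdist _ x y)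
    _ = C₁ * ∑' k : ℤ, ∑' j : ℤ, dyadicWeight N s G k j *
          (2 * excess (rearrangeFun u) (1 * 2 ^ k) (2 ^ j)) := by
        rw [← lintegral_dyadicKernel (measurable_rearrangeFun hN hB hfin)]
        simp_rw [lintegral_const_mul' _ _ hC₁]
    _ ≤ C₁ * ∑' k : ℤ, ∑' j : ℤ, dyadicWeight N s G k j *
          (2 * excess u (dilationFactor N * 2 ^ k) (2 ^ j)) := by
        gcongr with k j
        rw [one_mul]
        exact excess_rearrangeFun_le hN hu h0 hB hfin (by positivity) (by positivity)
    _ = C₁ * ∫⁻ x, ∫⁻ y, dyadicKernel N s G (dilationFactor N) |u x - u y| (dist x y) := by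
        rw [lintegral_dyadicKernel hu]
    _ ≤ C₁ * ∫⁻ x, ∫⁻ y, C₂ * ENNReal.ofReal (G (|u x - u y| / dist x y ^ s) /
          dist x y ^ (N : ℝ)) := by
        gcongr with x y
        exact h₂ _ _ (abs_nonneg _) dist_nonneg (hdist _ x y)
    _ = _ := by
        simp_rw [lintegral_const_mul' _ _ hC₂]
        rw [mul_assoc]

end Comparison

section Extension

variable {N : ℕ} {s : ℝ} {G g : ℝ → ℝ} {pm pp : ℝ} {u : EuclideanSpace ℝ (Fin N) → ℝ}
  {Ω : Set (EuclideanSpace ℝ (Fin N))}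

lemma IsYoungPair.measurable_kernel (hY : IsYoungPair G g) (hu : Measurable u) (s : ℝ) :
    Measurable fun p : EuclideanSpace ℝ (Fin N) × EuclideanSpace ℝ (Fin N) =>
      ENNReal.ofReal (G (|u p.1 - u p.2| / dist p.1 p.2 ^ s) / dist p.1 p.2 ^ (N : ℝ)) := by
  have hmono : Monotone fun t => G (max t 0) := fun a b hab =>
    hY.monotoneOn (mem_Ici.2 (le_max_right _ _)) (mem_Ici.2 (le_max_right _ _))
      (max_le_max_right 0 hab)
  have harg : Measurable fun p : EuclideanSpace ℝ (Fin N) × EuclideanSpace ℝ (Fin N) =>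
      |u p.1 - u p.2| / dist p.1 p.2 ^ s :=
    ((hu.comp measurable_fst).sub (hu.comp measurable_snd)).abs.div
      (measurable_dist.pow_const s)
  have h := ((hmono.measurable.comp harg).div (measurable_dist.pow_const (N : ℝ))).ennreal_ofReal
  convert h using 3 with p
  simp only [Pi.div_apply, Function.comp_apply]
  rw [max_eq_left (by positivity)]

lemma ne_univ_of_volume_lt_top (hN : 1 ≤ N) (hΩfin : volume Ω < ⊤) : Ω ≠ univ := by
  rintro rfl
  have : Nonempty (Fin N) := ⟨⟨0, hN⟩⟩
  have : NoncompactSpace (EuclideanSpace ℝ (Fin N)) := NormedSpace.noncompactSpace ℝ _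
  rw [measure_univ_of_isAddLeftInvariant] at hΩfin
  exact lt_irrefl _ hΩfin

lemma infDist_frontier_pos (hΩopen : IsOpen Ω) (hΩ : Ω ≠ univ) {x : EuclideanSpace ℝ (Fin N)}
    (hx : x ∈ Ω) : 0 < infDist x (frontier Ω) := by
  obtain ⟨z, hz, -⟩ := exists_mem_frontier_infDist_compl_eq_dist hx hΩ
  refine (isClosed_frontier.notMem_iff_infDist_pos ⟨z, hz⟩).1 fun h => ?_
  rw [hΩopen.frontier_eq] at h
  exact h.2 hx

lemma infDist_frontier_le_dist (hΩ : Ω ≠ univ) {x y : EuclideanSpace ℝ (Fin N)} (hx : x ∈ Ω)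
    (hy : y ∉ Ω) : infDist x (frontier Ω) ≤ dist x y := by
  obtain ⟨z, hz, hdist⟩ := exists_mem_frontier_infDist_compl_eq_dist hx hΩ
  exact (infDist_le_dist_of_mem hz).trans (hdist ▸ infDist_le_dist_of_mem hy)

lemma kernel_le_of_le_dist (hs : 0 < s) (hY : IsYoungPair G g) (hG : GrowthCond G g pm pp)
    {a d r : ℝ} (ha : 0 ≤ a) (hd : 0 < d) (hdr : d ≤ r) :
    G (a / r ^ s) / r ^ (N : ℝ) ≤ G (a / d ^ s) * d ^ (s * pm) * r ^ (-((N : ℝ) + s * pm)) := by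
  have hr : 0 < r := hd.trans_le hdr
  have hds : 0 < d ^ s := Real.rpow_pos_of_pos hd s
  have hrs : 0 < r ^ s := Real.rpow_pos_of_pos hr s
  have h := hY.map_mul_le hG (l := d ^ s / r ^ s) (t := a / d ^ s) (by positivity)
    ((div_le_one hrs).2 (Real.rpow_le_rpow hd.le hdr hs.le)) (by positivity)
  have h1 : d ^ s / r ^ s * (a / d ^ s) = a / r ^ s := by field_simp
  rw [h1, Real.div_rpow hds.le hrs.le, ← Real.rpow_mul hd.le, ← Real.rpow_mul hr.le] at h
  rw [Real.rpow_neg hr.le, Real.rpow_add hr]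
  calc G (a / r ^ s) / r ^ (N : ℝ)
      ≤ (d ^ (s * pm) / r ^ (s * pm) * G (a / d ^ s)) / r ^ (N : ℝ) := by gcongr
    _ = _ := by
      have := (Real.rpow_pos_of_pos hr (s * pm)).ne'
      field_simp

/-- A Hardy inequality on `Ω` controls the seminorm over the whole space by that over `Ω`. -/
lemma fracSeminorm_univ_le (hN : 1 ≤ N) (hs : 0 < s) (hY : IsYoungPair G g)
    (hG : GrowthCond G g pm pp) (hΩopen : IsOpen Ω) (hΩfin : volume Ω < ⊤) {c₁ : ℝ} (hc₁ : 0 < c₁)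
    (hi : ∀ x ∈ Ω,
      (∫⁻ y in Ωᶜ, ENNReal.ofReal (dist x y ^ (-((N : ℝ) + s * pm)))) ≤
        ENNReal.ofReal (c₁ * infDist x (frontier Ω) ^ (-(s * pm))))
    (hu : Measurable u) (h0 : ∀ x, 0 ≤ u x) (huΩ : ∀ x ∉ Ω, u x = 0) :
    fracSeminorm s G u univ univ ≤ fracSeminorm s G u Ω Ω + 2 * (ENNReal.ofReal c₁ *
      ∫⁻ x in Ω, ENNReal.ofReal (G (u x / infDist x (frontier Ω) ^ s))) := by
  have hΩ := ne_univ_of_volume_lt_top hN hΩfin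
  have hΩm := hΩopen.measurableSet
  set K : EuclideanSpace ℝ (Fin N) → EuclideanSpace ℝ (Fin N) → ℝ≥0∞ := fun x y =>
    ENNReal.ofReal (G (|u x - u y| / dist x y ^ s) / dist x y ^ (N : ℝ)) with hK
  have hKm : Measurable (Function.uncurry K) := hY.measurable_kernel hu s
  have hKsymm : ∀ x y, K x y = K y x := fun x y => by
    simp only [hK]; rw [abs_sub_comm, dist_comm]
  have hcross : ∫⁻ x in Ω, ∫⁻ y in Ωᶜ, K x y ≤ ENNReal.ofReal c₁ *
      ∫⁻ x in Ω, ENNReal.ofReal (G (u x / infDist x (frontier Ω) ^ s)) := by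
    rw [← lintegral_const_mul' _ _ ENNReal.ofReal_ne_top]
    refine setLIntegral_mono' hΩm fun x hx => ?_
    have hδ := infDist_frontier_pos hΩopen hΩ hx
    set δ := infDist x (frontier Ω)
    have hδs : 0 < δ ^ s := Real.rpow_pos_of_pos hδ s
    have hG0 : 0 ≤ G (u x / δ ^ s) := hY.nonneg (div_nonneg (h0 x) hδs.le)
    calc ∫⁻ y in Ωᶜ, K x y
        ≤ ∫⁻ y in Ωᶜ, ENNReal.ofReal (G (u x / δ ^ s) * δ ^ (s * pm)) *
            ENNReal.ofReal (dist x y ^ (-((N : ℝ) + s * pm))) := by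
          refine setLIntegral_mono' hΩm.compl fun y hy => ?_
          rw [← ENNReal.ofReal_mul (by positivity)]
          refine ENNReal.ofReal_le_ofReal ?_
          rw [huΩ y hy, sub_zero, abs_of_nonneg (h0 x)]
          exact kernel_le_of_le_dist hs hY hG (h0 x) hδ (infDist_frontier_le_dist hΩ hx hy)
      _ ≤ ENNReal.ofReal (G (u x / δ ^ s) * δ ^ (s * pm)) *
            ENNReal.ofReal (c₁ * δ ^ (-(s * pm))) := by
          rw [lintegral_const_mul' _ _ ENNReal.ofReal_ne_top]
          gcongr
          exact hi x hx
      _ = ENNReal.ofReal c₁ * ENNReal.ofReal (G (u x / δ ^ s)) := by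
          rw [← ENNReal.ofReal_mul (by positivity), ← ENNReal.ofReal_mul hc₁.le,
            Real.rpow_neg hδ.le]
          congr 1
          have := (Real.rpow_pos_of_pos hδ (s * pm)).ne'
          field_simp
  have hm : ∀ A : Set (EuclideanSpace ℝ (Fin N)), Measurable fun x => ∫⁻ y in A, K x y :=
    fun A => hKm.lintegral_prod_right'
  have hout : ∫⁻ x in Ωᶜ, ∫⁻ y in Ωᶜ, K x y = 0 := by
    refine setLIntegral_eq_zero hΩm.compl fun x hx => ?_
    refine setLIntegral_eq_zero hΩm.compl fun y hy => ?_
    simp [hK, huΩ x hx, huΩ y hy, hY.map_zero]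
  have hswap : ∫⁻ x in Ωᶜ, ∫⁻ y in Ω, K x y = ∫⁻ x in Ω, ∫⁻ y in Ωᶜ, K x y := by
    rw [lintegral_lintegral_swap hKm.aemeasurable]
    simp_rw [hKsymm]
  have hsplit : ∀ A : Set (EuclideanSpace ℝ (Fin N)), ∫⁻ x in A, ∫⁻ y, K x y =
      (∫⁻ x in A, ∫⁻ y in Ω, K x y) + ∫⁻ x in A, ∫⁻ y in Ωᶜ, K x y := fun A => by
    rw [← lintegral_add_left (hm Ω)]
    exact lintegral_congr fun x => (lintegral_add_compl _ hΩm).symm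
  have htotal : fracSeminorm s G u univ univ =
      fracSeminorm s G u Ω Ω + 2 * ∫⁻ x in Ω, ∫⁻ y in Ωᶜ, K x y := by
    have : fracSeminorm s G u univ univ = ∫⁻ x, ∫⁻ y, K x y := by
      simp only [fracSeminorm, Measure.restrict_univ, hK]
    rw [this, ← lintegral_add_compl _ hΩm, hsplit, hsplit, hout, hswap, add_zero, two_mul,
      ← add_assoc]
    rfl
  rw [htotal]
  gcongr

end Extension

lemma fracSeminorm_le_univ {N : ℕ} (s : ℝ) (G : ℝ → ℝ) (u : EuclideanSpace ℝ (Fin N) → ℝ)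
    (A B : Set (EuclideanSpace ℝ (Fin N))) :
    fracSeminorm s G u A B ≤ fracSeminorm s G u univ univ :=
  (lintegral_mono fun _ => lintegral_mono_set (subset_univ B)).trans
    (lintegral_mono_set (subset_univ A))

/-- rearrangement bound on `Ω* × Ω*` assuming the integral estimate for the
complement kernel and the fractional Orlicz–Hardy inequality on `Ω`. -/
theorem rearrangement_bound_of_hardy_on_rearranged_set
    {N : ℕ} (hN : 1 ≤ N) {s : ℝ} (hs : s ∈ Set.Ioo (0 : ℝ) 1)
    {G g : ℝ → ℝ} (hY : IsYoungPair G g) {pm pp : ℝ} (hG : GrowthCond G g pm pp)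
    {Ω : Set (EuclideanSpace ℝ (Fin N))} (hΩopen : IsOpen Ω) (hΩne : Ω.Nonempty)
    (hΩfin : volume Ω < ⊤)
    {c₁ : ℝ} (hc₁ : 0 < c₁)
    (hi : ∀ x ∈ Ω,
      (∫⁻ y in Ωᶜ, ENNReal.ofReal (dist x y ^ (-((N : ℝ) + s * pm)))) ≤
        ENNReal.ofReal (c₁ * infDist x (frontier Ω) ^ (-(s * pm))))
    {c₂ : ℝ} (hc₂ : 0 < c₂)
    (hii : ∀ u : EuclideanSpace ℝ (Fin N) → ℝ, IsTestFun Ω u → (∀ x, 0 ≤ u x) →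
      (∫⁻ x in Ω, ENNReal.ofReal (G (u x / infDist x (frontier Ω) ^ s))) ≤
        ENNReal.ofReal c₂ * fracSeminorm s G u Ω Ω) :
    ∃ C > (0 : ℝ), ∀ u : EuclideanSpace ℝ (Fin N) → ℝ, IsTestFun Ω u → (∀ x, 0 ≤ u x) →
      fracSeminorm s G (rearrangeFun u) (rearrangeSet Ω) (rearrangeSet Ω) ≤
        ENNReal.ofReal C * fracSeminorm s G u Ω Ω := by
  obtain ⟨C₀, hC₀, hrearr⟩ := exists_fracSeminorm_rearrangeFun_le hN hs hY hG
  set C : ℝ≥0∞ := C₀ * (1 + 2 * (ENNReal.ofReal c₁ * ENNReal.ofReal c₂)) with hC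
  have hCtop : C ≠ ⊤ := by finiteness
  refine ⟨C.toReal + 1, by positivity, fun u hu h0 => ?_⟩
  obtain ⟨hsmooth, hsupp, hsub⟩ := hu
  have hmeas : Measurable u := hsmooth.continuous.measurable
  have huΩ : ∀ x ∉ Ω, u x = 0 := fun x hx =>
    image_eq_zero_of_notMem_tsupport fun h => hx (hsub h)
  obtain ⟨B, hB⟩ := hsupp.exists_bound_of_continuous hsmooth.continuous
  have hpos : volume {y | 0 < u y} ≠ ⊤ := by
    refine measure_ne_top_of_subset (fun y hy => ?_) hΩfin.ne
    by_contra hyΩ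
    exact (show 0 < u y from hy).ne' (huΩ y hyΩ)
  calc fracSeminorm s G (rearrangeFun u) (rearrangeSet Ω) (rearrangeSet Ω)
      ≤ fracSeminorm s G (rearrangeFun u) univ univ := fracSeminorm_le_univ _ _ _ _ _
    _ ≤ C₀ * fracSeminorm s G u univ univ :=
        hrearr u hmeas h0 ⟨B, fun x => (le_abs_self _).trans (hB x)⟩ hpos
    _ ≤ C₀ * (fracSeminorm s G u Ω Ω + 2 * (ENNReal.ofReal c₁ *
          (ENNReal.ofReal c₂ * fracSeminorm s G u Ω Ω))) := by
        gcongr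
        refine (fracSeminorm_univ_le hN hs.1 hY hG hΩopen hΩfin hc₁ hi hmeas h0 huΩ).trans ?_
        gcongr
        exact hii u ⟨hsmooth, hsupp, hsub⟩ h0
    _ = C * fracSeminorm s G u Ω Ω := by rw [hC]; ring
    _ ≤ ENNReal.ofReal (C.toReal + 1) * fracSeminorm s G u Ω Ω := by
        gcongr
        exact (ENNReal.le_ofReal_iff_toReal_le hCtop (by positivity)).2 (by linarith)
end
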